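/- arXiv:1902.06324 — 2 statements merged into one kernel-verified Lean document; each statement's English description precedes it below -/
import Mathlib

section
/- Let k be an algebraically closed field. There exist irreducible homogeneous polynomials f, g ∈ k[x₀,x₁,x₂] of total degree 8 such that the degree-zero localization rings A_f and A_g are isomorphic as k-algebras (the curves V(f) and V(g) have isomorphic complements in ℙ²), but f and g are not projectively equivalent. -/
open MvPolynomial

attribute [local instance] MvPolynomial.gradedAlgebra

/-- The degree-zero part `A_f` of the localization of `k[x₀,x₁,x₂]` away from `f`,
i.e. the coordinate ring of the affine variety `ℙ² ∖ V(f)`. -/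
noncomputable abbrev AwayRing (k : Type) [Field k] (f : MvPolynomial (Fin 3) k) : Type :=
  HomogeneousLocalization.Away (homogeneousSubmodule (Fin 3) k) f

noncomputable instance (k : Type) [Field k] (f : MvPolynomial (Fin 3) k) :
    Algebra k (AwayRing k f) :=
  ((algebraMap (homogeneousSubmodule (Fin 3) k 0) (AwayRing k f)).comp
    (algebraMap k (homogeneousSubmodule (Fin 3) k 0))).toAlgebra

/-- Two (homogeneous) polynomials are projectively equivalent if a linear change of
coordinates by an invertible matrix sends one to a nonzero scalar multiple of the other. -/
def ProjEquiv {k : Type} [Field k] (f g : MvPolynomial (Fin 3) k) : Prop :=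
  ∃ N : Matrix (Fin 3) (Fin 3) k, IsUnit N.det ∧ ∃ c : kˣ,
    aeval (fun i => ∑ j, C (N i j) * X j) f = (c : k) • g

/-!
Let `N` be the nodal cubic `xyz = x³ + y³`, with the branch `t ↦ [t : t² : 1 + t³]` at its node
`[0 : 0 : 1]`. Curves of degrees 2, 5 and 8 with contact of orders 5, 13 and 21 with this branch are
the ingredients of a Cremona involution `S` of degree 8 that restricts to an automorphism of the
complement of `N`. For nonzero `a` and `b`, let `L_{a,b}` be the tangent line to `N` at the point
`t = a / b`, meeting `N` again at `t = -b² / a²`. A quadratic transformation `T_{a,b}` preserves `N`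
and restricts to an isomorphism from the complement of `L_{a,b}` to that of `L_{b,a}`. The octics of
the counterexample are the images of `L_{a,b}` and `L_{b,a}` under `S`. Since `N²¹` is a common
factor of the coordinates of `S ∘ T_{a,b} ∘ S`, this map does not contract `N`, and it restricts to
an isomorphism of the complements of the two octics.

The only singular point of these octics is the node of `N`, so a projective equivalence fixes the
node; the contact of order 21 with the branch above then forces it to be diagonal. Comparing the two
octics on the tangent line `y = 0` of the branch leaves only `a⁶ = b⁶`.
-/

namespace NodalCubic

section Forms

variable {R : Type*} [CommRing R]

/-- The conic `yz = x²`. It has contact of order 5 with the branch `arc` of the nodal cubic. -/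
def conic (v : Fin 3 → R) : R :=
  v 1 * v 2 - v 0 ^ 2

/-- The cubic `xyz = x³ + y³`, whose only singular point is the node `[0 : 0 : 1]`. -/
def nodalCubic (v : Fin 3 → R) : R :=
  v 0 * conic v - v 1 ^ 3

/-- A cubic having contact of order 8 with the branch `arc` of the nodal cubic. -/
def cubic (v : Fin 3 → R) : R :=
  v 2 * conic v - v 0 * v 1 ^ 2

/-- A quintic having contact of order 13 with the branch `arc` of the nodal cubic. -/
def quintic (v : Fin 3 → R) : R :=
  conic v * cubic v - v 1 ^ 2 * nodalCubic v

/-- An octic having contact of order 21 with the branch `arc` of the nodal cubic. -/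
def octic (v : Fin 3 → R) : R :=
  cubic v * quintic v - v 1 * conic v ^ 2 * nodalCubic v

/-- Homogeneous coordinates of a Cremona involution of degree 8 that contracts the nodal cubic to
its node and is an automorphism of the complement; see `involution_involution`. -/
def involution (v : Fin 3 → R) : Fin 3 → R :=
  ![nodalCubic v * quintic v, nodalCubic v ^ 2 * conic v, octic v]

@[simp]
lemma involution_zero (v : Fin 3 → R) : involution v 0 = nodalCubic v * quintic v := rfl

@[simp]
lemma involution_one (v : Fin 3 → R) : involution v 1 = nodalCubic v ^ 2 * conic v := rfl

@[simp]
lemma involution_two (v : Fin 3 → R) : involution v 2 = octic v := rfl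

/-- The tangent line to the nodal cubic at `arc (a / b)`, which meets the cubic again at
`arc (-b ^ 2 / a ^ 2)`. -/
def tangentLine (a b : R) (v : Fin 3 → R) : R :=
  (a ^ 4 - 2 * a * b ^ 3) * v 0 + (b ^ 4 - 2 * a ^ 3 * b) * v 1 + a ^ 2 * b ^ 2 * v 2

/-- Homogeneous coordinates of a quadratic Cremona transformation that preserves the nodal cubic,
contracts only `tangentLine a b`, and has `quadraticMap b a` as its inverse. -/
def quadraticMap (a b : R) (v : Fin 3 → R) : Fin 3 → R :=
  ![-(a * b ^ 2) * (b ^ 3 * v 1 ^ 2 - 3 * a * b ^ 2 * v 0 * v 1 + 3 * a ^ 2 * b * v 0 ^ 2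
      - a ^ 3 * (v 0 * v 2 - v 1 ^ 2)),
    a ^ 2 * b * (b ^ 3 * conic v - 3 * a * b ^ 2 * v 1 ^ 2 + 3 * a ^ 2 * b * v 0 * v 1
      - a ^ 3 * v 0 ^ 2),
    -(a ^ 3 * b ^ 3) * (v 2 ^ 2 - 2 * v 0 * v 1) + 3 * a ^ 2 * b ^ 4 * (v 0 * v 2 - v 1 ^ 2)
      - 3 * a * b ^ 5 * v 0 ^ 2 + (a ^ 6 + b ^ 6) * v 0 * v 1 - 3 * a ^ 5 * b * v 1 ^ 2
      + 3 * a ^ 4 * b ^ 2 * conic v]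

/-- The image of `tangentLine a b` under `involution`; the octics of the counterexample. -/
def tangentOctic (a b : R) (v : Fin 3 → R) : R :=
  tangentLine a b (involution v)

end Forms

section Naturality

variable {R R' G : Type*} [CommRing R] [CommRing R'] [FunLike G R R'] [RingHomClass G R R'] (φ : G)

lemma map_conic (v : Fin 3 → R) : φ (conic v) = conic fun i => φ (v i) := by
  simp [conic]

lemma map_nodalCubic (v : Fin 3 → R) : φ (nodalCubic v) = nodalCubic fun i => φ (v i) := by
  simp [nodalCubic, map_conic]

lemma map_cubic (v : Fin 3 → R) : φ (cubic v) = cubic fun i => φ (v i) := by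
  simp [cubic, map_conic]

lemma map_quintic (v : Fin 3 → R) : φ (quintic v) = quintic fun i => φ (v i) := by
  simp [quintic, map_conic, map_cubic, map_nodalCubic]

lemma map_octic (v : Fin 3 → R) : φ (octic v) = octic fun i => φ (v i) := by
  simp [octic, map_conic, map_cubic, map_nodalCubic, map_quintic]

lemma map_involution (v : Fin 3 → R) (i : Fin 3) :
    φ (involution v i) = involution (fun j => φ (v j)) i := by
  fin_cases i <;> simp [map_conic, map_nodalCubic, map_quintic, map_octic]

lemma map_quadraticMap (a b : R) (v : Fin 3 → R) (i : Fin 3) :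
    φ (quadraticMap a b v i) = quadraticMap (φ a) (φ b) (fun j => φ (v j)) i := by
  fin_cases i <;> simp [quadraticMap, map_conic, map_ofNat]

lemma map_tangentLine (a b : R) (v : Fin 3 → R) :
    φ (tangentLine a b v) = tangentLine (φ a) (φ b) fun i => φ (v i) := by
  simp [tangentLine, map_ofNat]

lemma map_tangentOctic (a b : R) (v : Fin 3 → R) :
    φ (tangentOctic a b v) = tangentOctic (φ a) (φ b) fun i => φ (v i) := by
  simp only [tangentOctic, map_tangentLine, map_involution]

end Naturality

section Scaling

variable {R : Type*} [CommRing R] (a b c : R) (v : Fin 3 → R)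

lemma conic_smul : conic (c • v) = c ^ 2 * conic v := by
  simp only [conic, Pi.smul_apply, smul_eq_mul]; ring

lemma nodalCubic_smul : nodalCubic (c • v) = c ^ 3 * nodalCubic v := by
  simp only [nodalCubic, conic_smul, Pi.smul_apply, smul_eq_mul]; ring

lemma cubic_smul : cubic (c • v) = c ^ 3 * cubic v := by
  simp only [cubic, conic_smul, Pi.smul_apply, smul_eq_mul]; ring

lemma quintic_smul : quintic (c • v) = c ^ 5 * quintic v := by
  simp only [quintic, conic_smul, cubic_smul, nodalCubic_smul, Pi.smul_apply, smul_eq_mul]; ring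

lemma octic_smul : octic (c • v) = c ^ 8 * octic v := by
  simp only [octic, conic_smul, cubic_smul, nodalCubic_smul, quintic_smul, Pi.smul_apply,
    smul_eq_mul]
  ring

lemma involution_smul : involution (c • v) = c ^ 8 • involution v := by
  funext i
  fin_cases i <;>
    simp only [Fin.zero_eta, Fin.mk_one, Fin.reduceFinMk, Pi.smul_apply, smul_eq_mul,
      involution_zero, involution_one, involution_two, nodalCubic_smul, quintic_smul, conic_smul,
      octic_smul] <;>
    ring

lemma tangentLine_smul : tangentLine a b (c • v) = c * tangentLine a b v := by
  simp only [tangentLine, Pi.smul_apply, smul_eq_mul]; ring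

lemma quadraticMap_smul : quadraticMap a b (c • v) = c ^ 2 • quadraticMap a b v := by
  funext i
  fin_cases i <;>
    simp only [Fin.zero_eta, Fin.mk_one, Fin.reduceFinMk, Pi.smul_apply, smul_eq_mul,
      Matrix.cons_val, quadraticMap, conic] <;>
    ring

lemma tangentOctic_smul : tangentOctic a b (c • v) = c ^ 8 * tangentOctic a b v := by
  rw [tangentOctic, involution_smul, tangentLine_smul, tangentOctic]

end Scaling

section Composition

variable {R : Type*} [CommRing R] (a b : R) (v : Fin 3 → R)

lemma zero_mul_conic : v 0 * conic v = nodalCubic v + v 1 ^ 3 := by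
  simp only [nodalCubic]; ring

lemma zero_mul_cubic : v 0 * cubic v = v 2 * nodalCubic v + v 1 ^ 2 * conic v := by
  simp only [cubic, nodalCubic, conic]; ring

lemma one_mul_cubic : v 1 * cubic v = v 0 * nodalCubic v + conic v ^ 2 := by
  simp only [cubic, nodalCubic, conic]; ring

lemma one_mul_quintic : v 1 * quintic v = nodalCubic v ^ 2 + conic v ^ 3 := by
  simp only [quintic, cubic, nodalCubic, conic]; ring

lemma one_mul_octic :
    v 1 * octic v = nodalCubic v ^ 2 * cubic v + conic v ^ 2 * quintic v := by
  simp only [octic, quintic, cubic, nodalCubic, conic]; ring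

lemma conic_mul_octic : conic v * octic v = nodalCubic v ^ 3 * v 1 + quintic v ^ 2 := by
  simp only [octic, quintic, cubic, nodalCubic, conic]; ring

lemma conic_involution : conic (involution v) = nodalCubic v ^ 5 * v 1 := by
  rw [conic, involution_zero, involution_one, involution_two]
  linear_combination nodalCubic v ^ 2 * conic_mul_octic v

lemma nodalCubic_involution : nodalCubic (involution v) = nodalCubic v ^ 8 := by
  rw [nodalCubic, conic_involution, involution_zero, involution_one]
  linear_combination nodalCubic v ^ 6 * one_mul_quintic v

lemma cubic_involution : cubic (involution v) = nodalCubic v ^ 7 * cubic v := by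
  rw [cubic, conic_involution, involution_zero, involution_one, involution_two]
  linear_combination nodalCubic v ^ 5 * one_mul_octic v

lemma quintic_involution : quintic (involution v) = nodalCubic v ^ 13 * v 0 := by
  rw [quintic, conic_involution, cubic_involution, nodalCubic_involution, involution_one]
  linear_combination nodalCubic v ^ 12 * one_mul_cubic v

lemma octic_involution : octic (involution v) = nodalCubic v ^ 21 * v 2 := by
  rw [octic, conic_involution, cubic_involution, nodalCubic_involution, quintic_involution,
    involution_one]
  linear_combination nodalCubic v ^ 20 * zero_mul_cubic v

lemma involution_involution : involution (involution v) = nodalCubic v ^ 21 • v := by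
  ext i
  fin_cases i <;>
    simp only [Fin.zero_eta, Fin.mk_one, Fin.reduceFinMk, Pi.smul_apply, smul_eq_mul,
      involution_zero, involution_one, involution_two, nodalCubic_involution, quintic_involution,
      conic_involution, octic_involution] <;>
    ring

lemma tangentOctic_involution :
    tangentOctic a b (involution v) = nodalCubic v ^ 21 * tangentLine a b v := by
  rw [tangentOctic, involution_involution, tangentLine_smul]

lemma tangentLine_quadraticMap :
    tangentLine b a (quadraticMap a b v) = -(a * b) * tangentLine a b v ^ 2 := by
  simp only [tangentLine, quadraticMap, conic, Matrix.cons_val]; ring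

lemma nodalCubic_quadraticMap :
    nodalCubic (quadraticMap a b v) = -(a * b) ^ 3 * tangentLine a b v ^ 3 * nodalCubic v := by
  simp only [tangentLine, quadraticMap, nodalCubic, conic, Matrix.cons_val]; ring

lemma quadraticMap_quadraticMap :
    quadraticMap b a (quadraticMap a b v) = (-(a * b) ^ 3 * tangentLine a b v ^ 3) • v := by
  ext i
  fin_cases i <;>
    simp only [Fin.zero_eta, Fin.mk_one, Fin.reduceFinMk, Pi.smul_apply, smul_eq_mul,
      Matrix.cons_val, tangentLine, quadraticMap, conic] <;>
    ring

lemma nodalCubic_quadraticMap_involution :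
    nodalCubic (quadraticMap a b (involution v)) =
      -(a * b) ^ 3 * tangentOctic a b v ^ 3 * nodalCubic v ^ 8 := by
  rw [nodalCubic_quadraticMap, nodalCubic_involution, tangentOctic]

lemma quadraticMap_involution_zero :
    ∃ r, quadraticMap a b (involution v) 0 =
      nodalCubic v * (a ^ 4 * b ^ 2 * (quintic v * octic v) + nodalCubic v * r) :=
  ⟨-(a * b ^ 2) * (b ^ 3 * nodalCubic v ^ 2 * conic v ^ 2
    - 3 * a * b ^ 2 * nodalCubic v * quintic v * conic v + 3 * a ^ 2 * b * quintic v ^ 2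
    + a ^ 3 * nodalCubic v ^ 2 * conic v ^ 2), by
    simp only [quadraticMap, involution, Matrix.cons_val]; ring⟩

lemma quadraticMap_involution_one :
    ∃ r, quadraticMap a b (involution v) 1 =
      nodalCubic v ^ 2 * (-(a ^ 5 * b) * quintic v ^ 2 + nodalCubic v * r) :=
  ⟨a ^ 2 * b * (b ^ 3 * nodalCubic v ^ 2 * v 1
    - 3 * a * b ^ 2 * nodalCubic v * conic v ^ 2 + 3 * a ^ 2 * b * quintic v * conic v), by
    simp only [quadraticMap, conic_involution, involution_zero, involution_one, Matrix.cons_val]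
    ring⟩

end Composition

section Arc

variable {R : Type*} [CommRing R]

/-- A parametrization of the nodal cubic, with the node at `t = 0` and at infinity. As `t → 0` it
traces the branch of the node tangent to the line `y = 0`. -/
def arc (t : R) : Fin 3 → R :=
  ![t, t ^ 2, 1 + t ^ 3]

variable (a b t : R)

lemma nodalCubic_arc : nodalCubic (arc t) = 0 := by
  simp only [nodalCubic, conic, arc, Matrix.cons_val]; ring

lemma quintic_arc : quintic (arc t) = t ^ 13 := by
  simp only [quintic, cubic, nodalCubic, conic, arc, Matrix.cons_val]; ring

lemma octic_arc : octic (arc t) = t ^ 21 := by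
  simp only [octic, quintic, cubic, nodalCubic, conic, arc, Matrix.cons_val]; ring

lemma tangentOctic_arc : tangentOctic a b (arc t) = a ^ 2 * b ^ 2 * t ^ 21 := by
  simp [tangentOctic, tangentLine, involution, octic_arc, nodalCubic_arc]

end Arc

section Homogeneity

variable {σ R : Type*} [CommRing R]

/-- The substitution `Xᵢ ↦ t Xᵢ`, with values in polynomials in a new variable `t`; a polynomial is
homogeneous of degree `n` exactly when it is an eigenvector with eigenvalue `tⁿ`. -/
noncomputable def scale : MvPolynomial σ R →ₐ[R] Polynomial (MvPolynomial σ R) :=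
  aeval fun i => Polynomial.X * Polynomial.C (X i)

lemma scale_C (r : R) : scale (C r : MvPolynomial σ R) = Polynomial.C (C r) :=
  aeval_C _ r

lemma scale_X (i : σ) :
    scale (X i : MvPolynomial σ R) = Polynomial.X * Polynomial.C (X i) :=
  aeval_X _ i

lemma scale_comp_X : (fun i => scale (X i : MvPolynomial σ R)) =
    (Polynomial.X : Polynomial (MvPolynomial σ R)) • fun i => Polynomial.C (X i) :=
  funext scale_X

lemma scale_monomial (d : σ →₀ ℕ) (r : R) :
    scale (monomial d r) = Polynomial.monomial d.degree (monomial d r) := by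
  rw [scale, aeval_monomial, ← Polynomial.C_mul_X_pow_eq_monomial, monomial_eq]
  simp only [Finsupp.prod, mul_pow, Finset.prod_mul_distrib, Finset.prod_pow_eq_pow_sum,
    Finsupp.degree_apply, map_mul, map_prod, map_pow]
  rw [Polynomial.algebraMap_apply, algebraMap_eq]
  ring

lemma coeff_scale (p : MvPolynomial σ R) (n : ℕ) :
    (scale p).coeff n = homogeneousComponent n p := by
  induction p using MvPolynomial.induction_on' with
  | monomial d r =>
    rw [scale_monomial, Polynomial.coeff_monomial]
    split_ifs with h
    · rw [homogeneousComponent_of_mem (isHomogeneous_monomial r h), if_pos rfl]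
    · rw [homogeneousComponent_of_mem (isHomogeneous_monomial r rfl), if_neg (Ne.symm h)]
  | add p q hp hq => simp only [map_add, Polynomial.coeff_add, hp, hq]

lemma isHomogeneous_iff_scale_eq {p : MvPolynomial σ R} {n : ℕ} :
    p.IsHomogeneous n ↔ scale p = Polynomial.X ^ n * Polynomial.C p := by
  refine ⟨fun h => ?_, fun h => ?_⟩
  · ext1 m
    rw [coeff_scale, homogeneousComponent_of_mem h, mul_comm, Polynomial.coeff_C_mul_X_pow]
  · have := coeff_scale p n
    rw [h, mul_comm, Polynomial.coeff_C_mul_X_pow, if_pos rfl] at this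
    exact this ▸ homogeneousComponent_isHomogeneous n p

lemma eval₂_scale {A : Type*} [CommRing A] [Algebra R A] (c : A) (v : σ → A)
    (p : MvPolynomial σ R) :
    (scale p).eval₂ (aeval v : MvPolynomial σ R →ₐ[R] A) c = aeval (c • v) p := by
  induction p using MvPolynomial.induction_on with
  | C r => simp
  | add p q hp hq => simp only [map_add, Polynomial.eval₂_add, hp, hq]
  | mul_X p i hp => simp [Polynomial.eval₂_mul, hp, scale_X, mul_comm c]

lemma aeval_smul_of_isHomogeneous {A : Type*} [CommRing A] [Algebra R A] {p : MvPolynomial σ R}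
    {n : ℕ} (hp : p.IsHomogeneous n) (c : A) (v : σ → A) :
    aeval (c • v) p = c ^ n * aeval v p := by
  rw [← eval₂_scale, isHomogeneous_iff_scale_eq.1 hp, Polynomial.eval₂_mul, Polynomial.eval₂_X_pow,
    Polynomial.eval₂_C]
  rfl

variable [IsDomain R]

-- `scale p` divides `X ^ n * C (p * q)`, so it is a power of `X` times a constant polynomial.
lemma isHomogeneous_of_mul_left {p q : MvPolynomial σ R} {n : ℕ} (h : (p * q).IsHomogeneous n)
    (h0 : p * q ≠ 0) : ∃ m, p.IsHomogeneous m := by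
  rw [isHomogeneous_iff_scale_eq, map_mul, mul_comm (Polynomial.X ^ n)] at h
  obtain ⟨m, -, r, s, -, hrs, hr, -⟩ := mul_eq_mul_prime_pow Polynomial.prime_X h
  have hr0 : r.natDegree = 0 := by
    have hrs0 : r * s ≠ 0 := hrs ▸ Polynomial.C_ne_zero.2 h0
    have := congrArg Polynomial.natDegree hrs
    rw [Polynomial.natDegree_C, Polynomial.natDegree_mul (left_ne_zero_of_mul hrs0)
      (right_ne_zero_of_mul hrs0)] at this
    lia
  obtain ⟨r, rfl⟩ := Polynomial.natDegree_eq_zero.1 hr0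
  have hp : r = p := by
    simpa [hr] using eval₂_scale 1 (X : σ → MvPolynomial σ R) p
  exact ⟨m, isHomogeneous_iff_scale_eq.2 (by rw [hr, hp, mul_comm])⟩

end Homogeneity

lemma irreducible_of_isHomogeneous_one {σ k : Type*} [Field k] {p : MvPolynomial σ k}
    (hp : p.IsHomogeneous 1) (h0 : p ≠ 0) : Irreducible p := by
  obtain ⟨i, hi⟩ := exists_coeff_ne_zero h0
  refine irreducible_of_totalDegree_eq_one (hp.totalDegree h0) fun r hr => ?_
  exact isUnit_iff_ne_zero.2 fun h => hi (zero_dvd_iff.1 (h ▸ hr i))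

lemma irreducible_nodalCubic (k : Type*) [Field k] :
    Irreducible (nodalCubic (X : Fin 3 → MvPolynomial (Fin 3) k)) := by
  have h : nodalCubic X = X 0 * X 1 * X 2 + (-(X 0 ^ 3 + X 1 ^ 3) : MvPolynomial (Fin 3) k) := by
    simp only [nodalCubic, conic]; ring
  rw [h]
  refine irreducible_mul_X_add _ _ 2 (mul_ne_zero (X_ne_zero _) (X_ne_zero _)) ?_ ?_ ?_
  · intro h
    simpa [vars_X] using vars_mul (X 0 : MvPolynomial (Fin 3) k) (X 1) h
  · rw [vars_neg]
    intro h
    have := vars_add_subset _ _ h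
    simp only [Finset.mem_union] at this
    rcases this with h | h <;> simpa [vars_X] using vars_pow (X _) _ h
  · refine IsRelPrime.mul_left ?_ ?_ <;>
      refine X_prime.irreducible.isRelPrime_iff_not_dvd.2 fun h => ?_
    · simpa using map_dvd (eval (![0, 1, 0] : Fin 3 → k)) h
    · simpa using map_dvd (eval (![1, 0, 0] : Fin 3 → k)) h

section Conjugate

variable {R : Type*} [CommRing R]

/-- `u` is the value at `v` of the conjugate of `quadraticMap a b` by `involution`, in homogeneous
coordinates reduced by the common factor `nodalCubic v ^ 21`. -/
def IsConjugate (a b : R) (v u : Fin 3 → R) : Prop :=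
  involution (quadraticMap a b (involution v)) = nodalCubic v ^ 21 • u

lemma IsConjugate.map {R' G : Type*} [CommRing R'] [FunLike G R R'] [RingHomClass G R R'] (φ : G)
    {a b : R} {v u : Fin 3 → R} (h : IsConjugate a b v u) :
    IsConjugate (φ a) (φ b) (fun i => φ (v i)) (fun i => φ (u i)) := by
  funext i
  simpa [map_involution, map_quadraticMap, map_nodalCubic] using congrArg φ (congrFun h i)

variable [IsDomain R] {a b : R} {v u : Fin 3 → R}

lemma IsConjugate.eq_smul {c : R} {w : Fin 3 → R} (hu : IsConjugate a b v u)
    (hw : IsConjugate a b (c • v) w) (hc : c ≠ 0) (hv : nodalCubic v ≠ 0) : w = c ^ 65 • u := by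
  refine (smul_right_inj (pow_ne_zero 21 (mul_ne_zero (pow_ne_zero 3 hc) hv))).1 ?_
  rw [IsConjugate, involution_smul, quadraticMap_smul, involution_smul, hu,
    nodalCubic_smul] at hw
  rw [← hw]
  simp only [smul_smul]
  congr 1
  ring

lemma IsConjugate.nodalCubic_eq (h : IsConjugate a b v u) (hv : nodalCubic v ≠ 0) :
    nodalCubic u = (-(a * b) ^ 3 * tangentOctic a b v ^ 3) ^ 8 * nodalCubic v := by
  have key := congrArg nodalCubic h
  rw [nodalCubic_involution, nodalCubic_quadraticMap_involution, nodalCubic_smul] at key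
  refine mul_left_cancel₀ (pow_ne_zero 63 hv) ?_
  linear_combination -key

lemma IsConjugate.involution_eq (h : IsConjugate a b v u) (hv : nodalCubic v ≠ 0) :
    involution u = (-(a * b) ^ 3 * tangentOctic a b v ^ 3) ^ 21 •
      quadraticMap a b (involution v) := by
  have key := congrArg involution h
  rw [involution_involution, nodalCubic_quadraticMap_involution, involution_smul] at key
  refine (smul_right_inj (pow_ne_zero 168 hv)).1 ?_
  rw [pow_mul (nodalCubic v) 21 8, ← key, smul_smul]
  congr 1
  ring

lemma IsConjugate.tangentOctic_eq (h : IsConjugate a b v u) (hv : nodalCubic v ≠ 0) :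
    tangentOctic b a u = (a * b) ^ 64 * tangentOctic a b v ^ 65 := by
  rw [tangentOctic, h.involution_eq hv, tangentLine_smul, tangentLine_quadraticMap, ← tangentOctic]
  ring

lemma IsConjugate.comp {w : Fin 3 → R} (hu : IsConjugate a b v u) (hw : IsConjugate b a u w)
    (hv : nodalCubic v ≠ 0) (hab : a * b ≠ 0) (hF : tangentOctic a b v ≠ 0) :
    w = ((a * b) ^ 3 * tangentOctic a b v ^ 3) ^ 176 • v := by
  have he : -(a * b) ^ 3 * tangentOctic a b v ^ 3 ≠ 0 :=
    mul_ne_zero (neg_ne_zero.2 (pow_ne_zero _ hab)) (pow_ne_zero _ hF)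
  rw [IsConjugate, hu.involution_eq hv, hu.nodalCubic_eq hv, quadraticMap_smul,
    quadraticMap_quadraticMap, smul_smul, involution_smul, involution_involution, ← tangentOctic,
    smul_smul] at hw
  refine (smul_right_inj (pow_ne_zero 21 (mul_ne_zero (pow_ne_zero 8 he) hv))).1 ?_
  rw [← hw]
  simp only [smul_smul]
  congr 1
  ring

end Conjugate

section Divisibility

variable {R : Type*} [CommRing R] [IsDomain R] {n x y : R} {w : Fin 3 → R}

lemma dvd_of_pow_mul_mul_dvd {n a b : R} (hn : Prime n) (ha : ¬n ∣ a) (m k : ℕ)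
    (h : n ^ (m + k) ∣ n ^ m * (a * b)) : n ^ k ∣ b :=
  hn.pow_dvd_of_dvd_mul_left k ha
    ((mul_dvd_mul_iff_left (pow_ne_zero m hn.ne_zero)).1 (pow_add n m k ▸ h))

lemma pow_dvd_involution (hn : Prime n) (h0 : w 0 = n * x) (hx : ¬n ∣ x) (h1 : w 1 = n ^ 2 * y)
    (hy : ¬n ∣ y) (hN : n ^ 8 ∣ nodalCubic w) (i : Fin 3) : n ^ 21 ∣ involution w i := by
  obtain ⟨N, hN⟩ := hN
  obtain ⟨Q, hQ⟩ : n ^ 5 ∣ conic w := dvd_of_pow_mul_mul_dvd hn hx 1 5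
    ⟨n ^ 2 * N + y ^ 3, by linear_combination zero_mul_conic w - conic w * h0 + hN +
      (w 1 ^ 2 + w 1 * (n ^ 2 * y) + (n ^ 2 * y) ^ 2) * h1⟩
  obtain ⟨B, hB⟩ : n ^ 7 ∣ cubic w := dvd_of_pow_mul_mul_dvd hn hy 2 7
    ⟨x * N + n * Q ^ 2, by
      have := one_mul_cubic w
      rw [h0, h1, hN, hQ] at this
      linear_combination this⟩
  obtain ⟨W, hW⟩ : n ^ 13 ∣ quintic w := dvd_of_pow_mul_mul_dvd hn hy 2 13
    ⟨n * N ^ 2 + Q ^ 3, by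
      have := one_mul_quintic w
      rw [h1, hN, hQ] at this
      linear_combination this⟩
  have hZ : n ^ 21 ∣ octic w := dvd_of_pow_mul_mul_dvd hn hy 2 21
    ⟨N ^ 2 * B + Q ^ 2 * W, by
      have := one_mul_octic w
      rw [h1, hN, hQ, hB, hW] at this
      linear_combination this⟩
  fin_cases i
  · exact ⟨N * W, by rw [Fin.zero_eta, involution_zero, hN, hW]; ring⟩
  · exact ⟨N ^ 2 * Q, by rw [Fin.mk_one, involution_one, hN, hQ]; ring⟩
  · exact hZ

end Divisibility

section GenericPoint

variable {k : Type*} [Field k]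

variable (k) in
/-- `nodalCubic` as a polynomial. -/
noncomputable def nodalPoly : MvPolynomial (Fin 3) k :=
  nodalCubic X

/-- `tangentOctic a b` as a polynomial. -/
noncomputable def octicPoly (a b : k) : MvPolynomial (Fin 3) k :=
  tangentOctic (C a) (C b) X

variable {A : Type*} [CommRing A] [Algebra k A] (v : Fin 3 → A)

lemma aeval_nodalPoly : aeval v (nodalPoly k) = nodalCubic v := by
  simp [nodalPoly, map_nodalCubic]

lemma aeval_octicPoly (a b : k) :
    aeval v (octicPoly a b) = tangentOctic (algebraMap k A a) (algebraMap k A b) v := by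
  simp [octicPoly, map_tangentOctic]

lemma prime_nodalPoly : Prime (nodalPoly k) :=
  (irreducible_nodalCubic k).prime

lemma not_nodalPoly_dvd {p : MvPolynomial (Fin 3) k}
    (hp : aeval (arc (Polynomial.X : Polynomial k)) p ≠ 0) : ¬nodalPoly k ∣ p := by
  rintro ⟨q, rfl⟩
  simp [aeval_nodalPoly, nodalCubic_arc] at hp

variable {a b : k}

lemma not_nodalPoly_dvd_octicPoly (ha : a ≠ 0) (hb : b ≠ 0) : ¬nodalPoly k ∣ octicPoly a b :=
  not_nodalPoly_dvd (by simp [aeval_octicPoly, tangentOctic_arc, ha, hb])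

lemma octicPoly_ne_zero (ha : a ≠ 0) (hb : b ≠ 0) : octicPoly a b ≠ 0 :=
  fun h => not_nodalPoly_dvd_octicPoly ha hb (h ▸ dvd_zero _)

lemma isHomogeneous_octicPoly : (octicPoly a b).IsHomogeneous 8 := by
  rw [isHomogeneous_iff_scale_eq, octicPoly, map_tangentOctic, map_tangentOctic, scale_comp_X,
    tangentOctic_smul]
  simp

lemma exists_isConjugate (ha : a ≠ 0) (hb : b ≠ 0) :
    ∃ P : Fin 3 → MvPolynomial (Fin 3) k, IsConjugate (C a) (C b) X P := by
  obtain ⟨r, hr⟩ := quadraticMap_involution_zero (C a) (C b) (X : Fin 3 → MvPolynomial (Fin 3) k)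
  obtain ⟨s, hs⟩ := quadraticMap_involution_one (C a) (C b) (X : Fin 3 → MvPolynomial (Fin 3) k)
  have hx : ¬nodalPoly k ∣ C a ^ 4 * C b ^ 2 * (quintic X * octic X) + nodalCubic X * r := by
    apply not_nodalPoly_dvd
    simp [map_quintic, map_octic, map_nodalCubic, quintic_arc, octic_arc, nodalCubic_arc, ha, hb]
  have hy : ¬nodalPoly k ∣ -(C a ^ 5 * C b) * quintic X ^ 2 + nodalCubic X * s := by
    apply not_nodalPoly_dvd
    simp [map_quintic, map_nodalCubic, quintic_arc, nodalCubic_arc, ha, hb]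
  have hN : nodalPoly k ^ 8 ∣ nodalCubic (quadraticMap (C a) (C b) (involution X)) := by
    rw [nodalCubic_quadraticMap_involution]
    exact dvd_mul_left _ _
  choose P hP using pow_dvd_involution prime_nodalPoly hr hx hs hy hN
  exact ⟨P, funext hP⟩

-- The conjugate at `t • X` is both `scale` of the one at `X` and a power of `t` times it.
lemma IsConjugate.isHomogeneous {P : Fin 3 → MvPolynomial (Fin 3) k}
    (hP : IsConjugate (C a) (C b) X P) (i : Fin 3) : (P i).IsHomogeneous 65 := by
  have h1 := hP.map (Polynomial.C : MvPolynomial (Fin 3) k →+* _)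
  have h2 := hP.map (scale : MvPolynomial (Fin 3) k →ₐ[k] _)
  have hN : nodalCubic (fun i => Polynomial.C (X i : MvPolynomial (Fin 3) k)) ≠ 0 := by
    rw [← map_nodalCubic]
    exact Polynomial.C_ne_zero.2 prime_nodalPoly.ne_zero
  rw [scale_comp_X] at h2
  have := h1.eq_smul (by simpa [scale_C] using h2) Polynomial.X_ne_zero hN
  exact isHomogeneous_iff_scale_eq.2 (congrFun this i)

end GenericPoint

section Irreducible

variable {k : Type*} [Field k] {a b : k}

/-- `tangentLine a b` as a polynomial. -/
noncomputable def tangentPoly (a b : k) : MvPolynomial (Fin 3) k :=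
  tangentLine (C a) (C b) X

lemma isHomogeneous_tangentPoly : (tangentPoly a b).IsHomogeneous 1 := by
  rw [isHomogeneous_iff_scale_eq, tangentPoly, map_tangentLine, map_tangentLine, scale_comp_X,
    tangentLine_smul]
  simp

lemma prime_tangentPoly (ha : a ≠ 0) (hb : b ≠ 0) : Prime (tangentPoly a b) := by
  refine (irreducible_of_isHomogeneous_one isHomogeneous_tangentPoly fun h => ?_).prime
  have := congrArg (aeval (![0, 0, 1] : Fin 3 → k)) h
  simp [tangentPoly, tangentLine, ha, hb] at this

/-- The substitution `p ↦ p ∘ involution`. -/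
noncomputable def involutionPullback : MvPolynomial (Fin 3) k →ₐ[k] MvPolynomial (Fin 3) k :=
  aeval (involution X)

lemma involutionPullback_nodalPoly : involutionPullback (nodalPoly k) = nodalPoly k ^ 8 := by
  rw [involutionPullback, aeval_nodalPoly, nodalCubic_involution, nodalPoly]

lemma involutionPullback_octicPoly :
    involutionPullback (octicPoly a b) = nodalPoly k ^ 21 * tangentPoly a b :=
  (aeval_octicPoly _ a b).trans (tangentOctic_involution _ _ _)

lemma involutionPullback_involutionPullback {p : MvPolynomial (Fin 3) k} {n : ℕ}
    (hp : p.IsHomogeneous n) :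
    involutionPullback (involutionPullback p) = (nodalPoly k ^ 21) ^ n * p := by
  have h : (fun i => involutionPullback (involution X i)) =
      nodalPoly k ^ 21 • (X : Fin 3 → MvPolynomial (Fin 3) k) := by
    funext i
    simp [involutionPullback, map_involution, involution_involution, nodalPoly]
  rw [← AlgHom.comp_apply, involutionPullback, comp_aeval, ← involutionPullback, h,
    aeval_smul_of_isHomogeneous hp, aeval_X_left_apply]

lemma isUnit_of_involutionPullback_dvd {q : MvPolynomial (Fin 3) k} {m n : ℕ}
    (hq : q.IsHomogeneous n) (hNq : ¬nodalPoly k ∣ q)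
    (h : involutionPullback q ∣ nodalPoly k ^ m) : IsUnit q := by
  have hqN : q ∣ nodalPoly k ^ (8 * m) := by
    have := map_dvd involutionPullback h
    rw [involutionPullback_involutionPullback hq, map_pow, involutionPullback_nodalPoly,
      ← pow_mul _ 8 m] at this
    exact dvd_of_mul_left_dvd this
  obtain ⟨i, -, hi⟩ := (dvd_prime_pow prime_nodalPoly _).1 hqN
  cases i with
  | zero => exact associated_one_iff_isUnit.1 (pow_zero (nodalPoly k) ▸ hi)
  | succ i => exact absurd ((dvd_pow_self _ i.succ_ne_zero).trans hi.symm.dvd) hNq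

lemma isUnit_of_tangentPoly_dvd (ha : a ≠ 0) (hb : b ≠ 0) {p q : MvPolynomial (Fin 3) k}
    (h : octicPoly a b = p * q) (hp : tangentPoly a b ∣ involutionPullback p) : IsUnit q := by
  obtain ⟨r, hr⟩ := hp
  have hrq : r * involutionPullback q = nodalPoly k ^ 21 := by
    refine mul_left_cancel₀ (prime_tangentPoly ha hb).ne_zero ?_
    have := congrArg involutionPullback h
    rw [involutionPullback_octicPoly, map_mul, hr] at this
    rw [← mul_assoc, ← this, mul_comm]
  obtain ⟨n, hn⟩ := isHomogeneous_of_mul_left (mul_comm p q ▸ h ▸ isHomogeneous_octicPoly)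
    (mul_comm p q ▸ h ▸ octicPoly_ne_zero ha hb)
  exact isUnit_of_involutionPullback_dvd hn
    (fun hN => not_nodalPoly_dvd_octicPoly ha hb (h ▸ hN.mul_left p)) (Dvd.intro_left r hrq)

lemma irreducible_octicPoly (ha : a ≠ 0) (hb : b ≠ 0) : Irreducible (octicPoly a b) where
  not_isUnit h := by
    simpa [aeval_octicPoly, tangentOctic_arc] using h.map (aeval (arc (0 : k)))
  isUnit_or_isUnit p q h := by
    have hL : tangentPoly a b ∣ involutionPullback p * involutionPullback q := by
      rw [← map_mul, ← h, involutionPullback_octicPoly]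
      exact dvd_mul_left _ _
    rcases (prime_tangentPoly ha hb).dvd_or_dvd hL with hp | hq
    · exact .inr (isUnit_of_tangentPoly_dvd ha hb h hp)
    · exact .inl (isUnit_of_tangentPoly_dvd ha hb (h.trans (mul_comm p q)) hq)

end Irreducible

section Complement

variable {k : Type} [Field k] {f g : MvPolynomial (Fin 3) k}

/-- The inclusion of `A_f` in the full localization `k[x₀,x₁,x₂][1/f]`. -/
noncomputable def awayVal (f : MvPolynomial (Fin 3) k) :
    AwayRing k f →ₐ[k] Localization.Away f where
  __ := algebraMap (AwayRing k f) (Localization.Away f)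
  commutes' _ := rfl

lemma awayVal_injective : Function.Injective (awayVal f) :=
  HomogeneousLocalization.val_injective _

lemma awayVal_mk_mul {d n : ℕ} (hf : f ∈ homogeneousSubmodule (Fin 3) k d)
    {x : MvPolynomial (Fin 3) k} (hx : x ∈ homogeneousSubmodule (Fin 3) k (n • d)) :
    awayVal f (HomogeneousLocalization.Away.mk _ hf n x hx) * algebraMap _ _ f ^ n =
      algebraMap _ _ x := by
  have h : awayVal f (HomogeneousLocalization.Away.mk _ hf n x hx) =
      Localization.mk x (⟨f ^ n, n, rfl⟩ : Submonoid.powers f) :=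
    HomogeneousLocalization.Away.val_mk _ n hf x hx
  rw [h, ← map_pow, Localization.mk_eq_mk']
  exact IsLocalization.mk'_spec ..

/-- The forms `P i` of degree `m` define a morphism `ℙ² ∖ V(f) → ℙ² ∖ V(g)`, where moreover
`g ∘ P` is a nonzero multiple of `f ^ m`, as is natural when `f` and `g` have the same degree. -/
structure IsComplementMap (P : Fin 3 → MvPolynomial (Fin 3) k) (f g : MvPolynomial (Fin 3) k)
    (m : ℕ) : Prop where
  isHomogeneous : ∀ i, (P i).IsHomogeneous m
  exists_aeval_eq : ∃ c : k, c ≠ 0 ∧ aeval P g = C c * f ^ m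

namespace IsComplementMap

variable {P P' : Fin 3 → MvPolynomial (Fin 3) k} {m m' d : ℕ}

lemma isUnit (h : IsComplementMap P f g m) :
    IsUnit ((IsScalarTower.toAlgHom k _ (Localization.Away f)).comp (aeval P) g) := by
  obtain ⟨c, hc, hg⟩ := h.exists_aeval_eq
  rw [AlgHom.comp_apply, hg, map_mul, map_pow]
  exact ((hc.isUnit.map C).map _).mul ((IsLocalization.Away.algebraMap_isUnit f).pow m)

/-- The map `k[x₀,x₁,x₂][1/g] → k[x₀,x₁,x₂][1/f]` substituting `P`. -/
noncomputable def localizationMap (h : IsComplementMap P f g m) :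
    Localization.Away g →ₐ[k] Localization.Away f :=
  IsLocalization.Away.liftAlgHom g h.isUnit

lemma localizationMap_algebraMap (h : IsComplementMap P f g m) (x : MvPolynomial (Fin 3) k) :
    h.localizationMap (algebraMap _ _ x) = algebraMap _ _ (aeval P x) :=
  IsLocalization.Away.lift_eq g h.isUnit x

lemma localizationMap_awayVal_mem_range (h : IsComplementMap P f g m)
    (hf : f.IsHomogeneous d) (hg : g.IsHomogeneous d) (z : AwayRing k g) :
    h.localizationMap (awayVal g z) ∈ (awayVal f).range := by
  obtain ⟨n, x, hx, rfl⟩ := HomogeneousLocalization.Away.mk_surjective _ hg z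
  obtain ⟨c, hc, hP⟩ := h.exists_aeval_eq
  have hy : (C (c⁻¹ ^ n) * aeval P x).IsHomogeneous ((m * n) • d) := by
    have := (IsHomogeneous.aeval hx P h.isHomogeneous).C_mul (c⁻¹ ^ n)
    rwa [smul_eq_mul, ← mul_assoc] at this
  have hx' := congrArg h.localizationMap (awayVal_mk_mul hg hx)
  obtain ⟨w, hw⟩ : ∃ w : AwayRing k f,
      awayVal f w * algebraMap _ _ f ^ (m * n) = algebraMap _ _ (C (c⁻¹ ^ n) * aeval P x) :=
    ⟨_, awayVal_mk_mul hf hy⟩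
  simp only [map_mul, map_pow, localizationMap_algebraMap, hP] at hx' hw
  let ι := algebraMap (MvPolynomial (Fin 3) k) (Localization.Away f)
  have hcc : ι (C c) ^ n * ι (C c⁻¹) ^ n = 1 := by
    rw [← mul_pow, ← map_mul, ← C_mul, mul_inv_cancel₀ hc, C_1, map_one, one_pow]
  refine ⟨w, (h.isUnit.pow n).mul_left_inj.1 ?_⟩
  rw [AlgHom.comp_apply, hP, IsScalarTower.coe_toAlgHom', map_mul, map_pow]
  change awayVal f w * _ = _
  linear_combination ι (C c) ^ n * hw - hx' + ι (aeval P x) * hcc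

/-- The pullback of regular functions along the morphism `ℙ² ∖ V(f) → ℙ² ∖ V(g)` given by `P`. -/
noncomputable def awayMap (h : IsComplementMap P f g m)
    (hf : f.IsHomogeneous d) (hg : g.IsHomogeneous d) : AwayRing k g →ₐ[k] AwayRing k f :=
  (AlgEquiv.ofInjective (awayVal f) awayVal_injective).symm.toAlgHom.comp
    ((h.localizationMap.comp (awayVal g)).codRestrict _ (h.localizationMap_awayVal_mem_range hf hg))

lemma awayVal_awayMap (h : IsComplementMap P f g m)
    (hf : f.IsHomogeneous d) (hg : g.IsHomogeneous d) (z : AwayRing k g) :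
    awayVal f (h.awayMap hf hg z) = h.localizationMap (awayVal g z) :=
  congrArg Subtype.val ((AlgEquiv.ofInjective (awayVal f) awayVal_injective).apply_symm_apply _)

lemma awayMap_awayMap (h : IsComplementMap P f g m) (h' : IsComplementMap P' g f m')
    (hf : f.IsHomogeneous d) (hg : g.IsHomogeneous d) {s : MvPolynomial (Fin 3) k}
    (hs : (fun i => aeval P (P' i)) = s • X) (z : AwayRing k f) :
    h.awayMap hf hg (h'.awayMap hg hf z) = z := by
  obtain ⟨n, x, hx, rfl⟩ := HomogeneousLocalization.Away.mk_surjective _ hf z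
  apply awayVal_injective
  rw [awayVal_awayMap, awayVal_awayMap]
  let Θ := h.localizationMap.comp h'.localizationMap
  have hΘ {e : ℕ} {p : MvPolynomial (Fin 3) k} (hp : p.IsHomogeneous e) :
      Θ (algebraMap _ _ p) = algebraMap _ _ s ^ e * algebraMap _ _ p := by
    rw [AlgHom.comp_apply, localizationMap_algebraMap, localizationMap_algebraMap,
      ← AlgHom.comp_apply, comp_aeval, hs, aeval_smul_of_isHomogeneous hp, aeval_X_left_apply,
      map_mul, map_pow]
  have hu : IsUnit (Θ (algebraMap _ _ f) ^ n) :=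
    ((IsLocalization.Away.algebraMap_isUnit f).map Θ).pow n
  refine (hu.mul_left_inj).1 ?_
  have hx' := awayVal_mk_mul hf hx
  calc _ = Θ (algebraMap _ _ x) := by rw [← hx', map_mul, map_pow]; rfl
    _ = _ := by rw [hΘ hx, hΘ hf, ← hx', smul_eq_mul]; ring

/-- Morphisms of complements that are mutually inverse in `ℙ²` give an isomorphism of coordinate
rings. -/
noncomputable def awayEquiv (h : IsComplementMap P f g m) (h' : IsComplementMap P' g f m')
    (hf : f.IsHomogeneous d) (hg : g.IsHomogeneous d) {s s' : MvPolynomial (Fin 3) k}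
    (hs : (fun i => aeval P (P' i)) = s • X) (hs' : (fun i => aeval P' (P i)) = s' • X) :
    AwayRing k f ≃ₐ[k] AwayRing k g :=
  AlgEquiv.ofAlgHom (h'.awayMap hg hf) (h.awayMap hf hg)
    (AlgHom.ext (h'.awayMap_awayMap h hg hf hs')) (AlgHom.ext (h.awayMap_awayMap h' hf hg hs))

end IsComplementMap

variable {a b : k} {P P' : Fin 3 → MvPolynomial (Fin 3) k}

lemma IsConjugate.isComplementMap (h : IsConjugate (C a) (C b) X P) (ha : a ≠ 0) (hb : b ≠ 0) :
    IsComplementMap P (octicPoly a b) (octicPoly b a) 65 where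
  isHomogeneous := h.isHomogeneous
  exists_aeval_eq := by
    refine ⟨(a * b) ^ 64, pow_ne_zero _ (mul_ne_zero ha hb), ?_⟩
    rw [aeval_octicPoly]
    simpa [octicPoly] using h.tangentOctic_eq prime_nodalPoly.ne_zero

lemma IsConjugate.aeval_comp (h : IsConjugate (C a) (C b) X P) (h' : IsConjugate (C b) (C a) X P')
    (ha : a ≠ 0) (hb : b ≠ 0) :
    (fun i => aeval P (P' i)) = ((C a * C b) ^ 3 * octicPoly a b ^ 3) ^ 176 • X := by
  refine h.comp ?_ prime_nodalPoly.ne_zero (by simp [ha, hb]) (octicPoly_ne_zero ha hb)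
  simpa using h'.map (aeval P : MvPolynomial (Fin 3) k →ₐ[k] MvPolynomial (Fin 3) k)

theorem nonempty_awayRing_octicPoly_algEquiv (ha : a ≠ 0) (hb : b ≠ 0) :
    Nonempty (AwayRing k (octicPoly a b) ≃ₐ[k] AwayRing k (octicPoly b a)) := by
  obtain ⟨P, hP⟩ := exists_isConjugate ha hb
  obtain ⟨P', hP'⟩ := exists_isConjugate hb ha
  exact ⟨(hP.isComplementMap ha hb).awayEquiv (hP'.isComplementMap hb ha)
    isHomogeneous_octicPoly isHomogeneous_octicPoly (hP.aeval_comp hP' ha hb)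
    (hP'.aeval_comp hP hb ha)⟩

end Complement

section Contact

lemma pow_succ_dvd_of_pow_dvd_pow {R : Type*} [CommRing R] [IsDomain R] {t r : R} (ht : Prime t)
    {n m : ℕ} (h : t ^ (n * m + 1) ∣ r ^ n) : t ^ (m + 1) ∣ r := by
  rw [pow_dvd_iff_le_emultiplicity] at h ⊢
  rw [emultiplicity_pow ht] at h
  by_contra! hr
  obtain ⟨e, he⟩ := ENat.ne_top_iff_exists.1 hr.ne_top
  rw [← he] at h hr
  norm_cast at h hr
  have : n * e ≤ n * m := Nat.mul_le_mul_left n (Nat.le_of_lt_succ hr)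
  omega

variable {R : Type*} [CommRing R] (a b : R) (v : Fin 3 → R)

-- `y * quintic` and `y² * octic` are polynomials in `x`, `conic` and `nodalCubic` alone.
lemma sq_one_mul_tangentOctic : v 1 ^ 2 * tangentOctic a b v =
    (a ^ 4 - 2 * a * b ^ 3) * (v 1 * nodalCubic v * (nodalCubic v ^ 2 + conic v ^ 3)) +
    (b ^ 4 - 2 * a ^ 3 * b) * (v 1 ^ 2 * conic v * nodalCubic v ^ 2) +
    a ^ 2 * b ^ 2 * (conic v ^ 5 + 2 * conic v ^ 2 * nodalCubic v ^ 2 +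
      v 0 * nodalCubic v ^ 3) := by
  simp only [tangentOctic, tangentLine, involution, octic, quintic, cubic, nodalCubic, conic,
    Matrix.cons_val]
  ring

variable {a b v} [IsDomain R] {t : R}

-- All terms of the octic but `a² b² z² conic³` are divisible by `t ^ (3 * n + 1)`.
lemma pow_succ_dvd_conic (ht : Prime t) (hab : ¬t ∣ a ^ 2 * b ^ 2) (h0 : t ∣ v 0) (h1 : t ∣ v 1)
    (h2 : ¬t ∣ v 2) {n : ℕ} (hn : t ^ n ∣ v 1 ^ 2) (hQ : t ^ n ∣ conic v)
    (hF : t ^ (3 * n + 1) ∣ tangentOctic a b v) : t ^ (n + 1) ∣ conic v := by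
  obtain ⟨x, hx⟩ := h0
  obtain ⟨y, hy⟩ := h1
  obtain ⟨s, hs⟩ := hn
  obtain ⟨r, hr⟩ := hQ
  set T := t ^ n with hT
  let m := x * r - y * s
  let e := s * (x * r + m)
  have hN : nodalCubic v = t * T * m := by
    rw [nodalCubic, hr, hx]
    linear_combination -v 1 * hs - T * s * hy
  have hB : cubic v = T * (v 2 * r - t * x * s) := by
    rw [cubic, hr, hs, hx]; ring
  have hW : quintic v = T ^ 2 * (v 2 * r ^ 2 - t * e) := by
    rw [quintic, hN, hB, hr, hs]; ring
  have hF' : tangentOctic a b v = t * T ^ 3 * ((a ^ 4 - 2 * a * b ^ 3) * (m * (v 2 * r ^ 2 - t * e))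
      + (b ^ 4 - 2 * a ^ 3 * b) * (t * m ^ 2 * r)
      - a ^ 2 * b ^ 2 * (v 2 * r * e + x * s * v 2 * r ^ 2 - t * x * s * e + v 1 * r ^ 2 * m))
      + a ^ 2 * b ^ 2 * v 2 ^ 2 * conic v ^ 3 := by
    rw [tangentOctic, tangentLine, involution_zero, involution_one, involution_two, octic, hW, hB,
      hN, hr]
    ring
  have hT3 : t ^ (3 * n + 1) = t * T ^ 3 := by rw [hT]; ring
  have hQ3 : t ^ (3 * n + 1) ∣ a ^ 2 * b ^ 2 * v 2 ^ 2 * conic v ^ 3 :=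
    (dvd_add_right (dvd_mul_of_dvd_left hT3.dvd _)).1 (hF' ▸ hF)
  refine pow_succ_dvd_of_pow_dvd_pow ht (ht.pow_dvd_of_dvd_mul_left _ ?_ hQ3)
  exact ht.not_dvd_mul hab (mt ht.dvd_of_dvd_pow h2)

lemma pow_five_dvd_conic (ht : Prime t) (hab : ¬t ∣ a ^ 2 * b ^ 2) (h0 : t ∣ v 0)
    (h1 : t ^ 2 ∣ v 1) (h2 : ¬t ∣ v 2) (hF : t ^ 13 ∣ tangentOctic a b v) : t ^ 5 ∣ conic v := by
  have h1' : t ^ 4 ∣ v 1 ^ 2 := pow_mul t 2 2 ▸ pow_dvd_pow_of_dvd h1 2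
  have step {n : ℕ} (hn : n ≤ 4) (hQ : t ^ n ∣ conic v) : t ^ (n + 1) ∣ conic v :=
    pow_succ_dvd_conic ht hab h0 (dvd_of_mul_left_dvd (sq t ▸ h1)) h2
      ((pow_dvd_pow t hn).trans h1') hQ ((pow_dvd_pow t (by omega)).trans hF)
  exact step le_rfl <| step (by decide) <| step (by decide) <| step (by decide) <|
    step (by decide) (by simp)

-- All terms of `y²` times the octic but `a² b² x nodalCubic³` are divisible by `t ^ (3 * n + 2)`.
lemma pow_succ_dvd_nodalCubic (ht : Prime t) (hab : ¬t ∣ a ^ 2 * b ^ 2) {x : R}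
    (h0 : v 0 = t * x) (hx : ¬t ∣ x) (h1 : t ^ 2 ∣ v 1) (hQ : t ^ 5 ∣ conic v) {n : ℕ}
    (hn : n ≤ 7) (hN : t ^ n ∣ nodalCubic v)
    (hF : t ^ (3 * n + 2) ∣ v 1 ^ 2 * tangentOctic a b v) : t ^ (n + 1) ∣ nodalCubic v := by
  obtain ⟨y, hy⟩ := h1
  obtain ⟨r, hr⟩ := hQ
  obtain ⟨m, hm⟩ := hN
  have key : v 1 ^ 2 * tangentOctic a b v =
      t ^ (3 * n + 2) * ((a ^ 4 - 2 * a * b ^ 3) * y * m ^ 3)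
      + t ^ (n + 17) * ((a ^ 4 - 2 * a * b ^ 3) * y * m * r ^ 3)
      + t ^ (2 * n + 9) * ((b ^ 4 - 2 * a ^ 3 * b) * y ^ 2 * r * m ^ 2)
      + t ^ (2 * n + 10) * (2 * a ^ 2 * b ^ 2 * r ^ 2 * m ^ 2)
      + t ^ 25 * (a ^ 2 * b ^ 2 * r ^ 5)
      + t * (a ^ 2 * b ^ 2 * (x * nodalCubic v ^ 3)) := by
    rw [sq_one_mul_tangentOctic, h0, hm, hr, hy]
    ring
  have le {e : ℕ} (he : 3 * n + 2 ≤ e) (c : R) : t ^ (3 * n + 2) ∣ t ^ e * c :=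
    (pow_dvd_pow t he).mul_right c
  rw [key, dvd_add_right ((((le le_rfl _).add (le (by omega) _)).add (le (by omega) _)).add
    (le (by omega) _) |>.add (le (by omega) _)), pow_succ', mul_dvd_mul_iff_left ht.ne_zero] at hF
  exact pow_succ_dvd_of_pow_dvd_pow ht
    (ht.pow_dvd_of_dvd_mul_left _ hx (ht.pow_dvd_of_dvd_mul_left _ hab hF))

lemma pow_eight_dvd_nodalCubic (ht : Prime t) (hab : ¬t ∣ a ^ 2 * b ^ 2) {x : R}
    (h0 : v 0 = t * x) (hx : ¬t ∣ x) (h1 : t ^ 2 ∣ v 1) (hQ : t ^ 5 ∣ conic v)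
    (hF : t ^ 21 ∣ tangentOctic a b v) : t ^ 8 ∣ nodalCubic v := by
  have h6 : t ^ 6 ∣ nodalCubic v :=
    dvd_sub (pow_succ' t 5 ▸ mul_dvd_mul ⟨x, h0⟩ hQ) (pow_mul t 2 3 ▸ pow_dvd_pow_of_dvd h1 3)
  have h25 : t ^ 25 ∣ v 1 ^ 2 * tangentOctic a b v := by
    rw [pow_add t 4 21, pow_mul t 2 2]
    exact mul_dvd_mul (pow_dvd_pow_of_dvd h1 2) hF
  have step {n : ℕ} (hn : n ≤ 7) : t ^ n ∣ nodalCubic v → t ^ (n + 1) ∣ nodalCubic v := fun hN =>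
    pow_succ_dvd_nodalCubic ht hab h0 hx h1 hQ hn hN ((pow_dvd_pow t (by omega)).trans h25)
  exact step le_rfl (step (by decide) h6)

end Contact

section SingularPoint

open Matrix

variable {σ k : Type*} [Field k]

/-- `f` vanishes to second order at `p`, that is, on all first order deformations of `p` over the
dual numbers. For homogeneous `f` and `p ≠ 0` this says that `V(f)` is singular at `[p]`. -/
def IsSingularPoint (f : MvPolynomial σ k) (p : σ → k) : Prop :=
  ∀ w : σ → DualNumber k, (∀ i, (w i).fst = p i) → aeval w f = 0

lemma aeval_mulVec_eq [Fintype σ] {A : Type*} [CommRing A] [Algebra k A] {f g : MvPolynomial σ k}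
    {M : Matrix σ σ k} {c : k} (h : aeval (fun i => ∑ j, C (M i j) * X j) f = c • g) (u : σ → A) :
    aeval (M.map (algebraMap k A) *ᵥ u) f = algebraMap k A c * aeval u g := by
  have h' := congrArg (aeval u) h
  rw [← AlgHom.comp_apply, comp_aeval, map_smul, Algebra.smul_def] at h'
  rw [← h']
  congr 2
  funext i
  simp [mulVec, dotProduct]

lemma IsSingularPoint.of_mulVec [Fintype σ] {f g : MvPolynomial σ k} {M : Matrix σ σ k} {c : k}
    (h : aeval (fun i => ∑ j, C (M i j) * X j) f = c • g) (hc : c ≠ 0) {p : σ → k}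
    (hp : IsSingularPoint f (M *ᵥ p)) : IsSingularPoint g p := by
  intro w hw
  have hMw := hp (M.map (algebraMap k _) *ᵥ w) fun i => by
    simp [mulVec, dotProduct, TrivSqZeroExt.algebraMap_eq_inl, TrivSqZeroExt.fst_sum, hw]
  rw [aeval_mulVec_eq h] at hMw
  exact ((hc.isUnit.map (algebraMap k _)).mul_right_eq_zero).1 hMw

lemma isSingularPoint_node (a b : k) {p : Fin 3 → k} (h0 : p 0 = 0) (h1 : p 1 = 0) :
    IsSingularPoint (octicPoly a b) p := by
  intro w hw
  have mul_eq_zero {x y : DualNumber k} (hx : x.fst = 0) (hy : y.fst = 0) : x * y = 0 := by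
    ext <;> simp [hx, hy]
  have hw0 := (hw 0).trans h0
  have hw1 := (hw 1).trans h1
  have h00 := mul_eq_zero hw0 hw0
  have h01 := mul_eq_zero hw0 hw1
  have h11 := mul_eq_zero hw1 hw1
  have hQ : conic w = w 1 * w 2 := by rw [conic]; linear_combination -h00
  have hN : nodalCubic w = 0 := by
    rw [nodalCubic, hQ]; linear_combination w 2 * h01 - w 1 * h11
  have hW : quintic w = 0 := by
    rw [quintic, cubic, hQ, hN]; linear_combination (w 2 ^ 3 - w 0 * w 1 * w 2) * h11
  rw [aeval_octicPoly, tangentOctic, tangentLine]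
  simp [octic, hN, hW]

-- Off the nodal cubic, `involution` is a local isomorphism carrying the octic to a line.
lemma nodalCubic_eq_zero_of_isSingularPoint {a b : k} (ha : a ≠ 0) (hb : b ≠ 0) {p : Fin 3 → k}
    (hp : IsSingularPoint (octicPoly a b) p) : nodalCubic p = 0 := by
  by_contra hN
  let u : Fin 3 → DualNumber k := fun i =>
    algebraMap k _ (involution p i) + ![0, 0, DualNumber.eps] i
  have hu : (fun i => TrivSqZeroExt.fstHom k k k (u i)) = involution p := by
    funext i
    fin_cases i <;> simp [u, TrivSqZeroExt.algebraMap_eq_inl]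
  have hNu : IsUnit (nodalCubic u) := by
    rw [TrivSqZeroExt.isUnit_iff_isUnit_fst, ← TrivSqZeroExt.fstHom_apply k, map_nodalCubic, hu,
      nodalCubic_involution]
    exact (pow_ne_zero 8 hN).isUnit
  have hF := hp (algebraMap k (DualNumber k) (nodalCubic p ^ 21)⁻¹ • involution u) fun i => by
    rw [← TrivSqZeroExt.fstHom_apply k, Pi.smul_apply, smul_eq_mul, map_mul, map_involution, hu,
      involution_involution, AlgHom.commutes]
    simp [hN]
  rw [aeval_octicPoly, tangentOctic_smul, tangentOctic_involution] at hF
  have hc : IsUnit (algebraMap k (DualNumber k) (nodalCubic p ^ 21)⁻¹) :=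
    (inv_ne_zero (pow_ne_zero 21 hN)).isUnit.map _
  rw [(hc.pow 8).mul_right_eq_zero, (hNu.pow 21).mul_right_eq_zero] at hF
  have hL : tangentLine (algebraMap k _ a) (algebraMap k _ b) u =
      algebraMap k _ (tangentLine a b (involution p)) +
        algebraMap k _ (a ^ 2 * b ^ 2) * DualNumber.eps := by
    rw [map_tangentLine]
    simp only [tangentLine, u, Matrix.cons_val, map_mul, map_pow]
    ring
  have := congrArg TrivSqZeroExt.snd (hL ▸ hF)
  simp [TrivSqZeroExt.algebraMap_eq_inl, ha, hb] at this

lemma isSingularPoint_octicPoly_iff {a b : k} (ha : a ≠ 0) (hb : b ≠ 0) {p : Fin 3 → k} :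
    IsSingularPoint (octicPoly a b) p ↔ p 0 = 0 ∧ p 1 = 0 := by
  refine ⟨fun hp => ?_, fun h => isSingularPoint_node a b h.1 h.2⟩
  have hN := nodalCubic_eq_zero_of_isSingularPoint ha hb hp
  have hF : tangentOctic a b p = 0 := by
    have := hp (fun i => algebraMap k _ (p i)) fun i => by simp [TrivSqZeroExt.algebraMap_eq_inl]
    rw [aeval_octicPoly, ← map_tangentOctic] at this
    simpa using this
  have hQ : conic p = 0 := by
    have := sq_one_mul_tangentOctic a b p
    simpa [hF, hN, ha, hb] using this
  have h1 : p 1 = 0 := by simpa [hN, hQ] using (zero_mul_conic p).symm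
  exact ⟨by simpa [conic, h1] using hQ, h1⟩

end SingularPoint

section Equivalence

open Matrix

variable {k : Type*} [Field k] {a b c : k} {M : Matrix (Fin 3) (Fin 3) k}

lemma apply_two_eq_zero (ha : a ≠ 0) (hb : b ≠ 0) (hM : IsUnit M.det) (hc : c ≠ 0)
    (h : aeval (fun i => ∑ j, C (M i j) * X j) (octicPoly a b) = c • octicPoly b a) :
    M 0 2 = 0 ∧ M 1 2 = 0 := by
  have hp : M *ᵥ (M⁻¹ *ᵥ ![0, 0, 1]) = ![0, 0, 1] := by
    rw [mulVec_mulVec, mul_nonsing_inv M hM, one_mulVec]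
  set p := M⁻¹ *ᵥ ![0, 0, 1]
  have hsing : IsSingularPoint (octicPoly a b) (M *ᵥ p) := by
    rw [hp]
    exact isSingularPoint_node a b rfl rfl
  obtain ⟨h0, h1⟩ := (isSingularPoint_octicPoly_iff hb ha).1 (hsing.of_mulVec h hc)
  have hMp (i) : M i 2 * p 2 = ![0, 0, 1] i := by
    simpa [mulVec, dotProduct, Fin.sum_univ_three, h0, h1] using congrFun hp i
  have hp2 : p 2 ≠ 0 := right_ne_zero_of_mul_eq_one (hMp 2)
  exact ⟨by simpa [hp2] using hMp 0, by simpa [hp2] using hMp 1⟩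

variable (M) in
/-- The image under `M` of the branch `arc` of the nodal cubic, as a formal arc in a new
variable. -/
noncomputable def mulArc : Fin 3 → Polynomial k :=
  M.map Polynomial.C *ᵥ arc Polynomial.X

lemma mulArc_apply (i : Fin 3) : mulArc M i = Polynomial.C (M i 0) * Polynomial.X +
    Polynomial.C (M i 1) * Polynomial.X ^ 2 + Polynomial.C (M i 2) * (1 + Polynomial.X ^ 3) := by
  simp [mulArc, mulVec, dotProduct, Fin.sum_univ_three, arc]

lemma X_pow_dvd_tangentOctic_mulArc
    (h : aeval (fun i => ∑ j, C (M i j) * X j) (octicPoly a b) = c • octicPoly b a) :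
    Polynomial.X ^ 21 ∣ tangentOctic (Polynomial.C a) (Polynomial.C b) (mulArc M) := by
  have := aeval_mulVec_eq h (arc (Polynomial.X : Polynomial k))
  rw [aeval_octicPoly, aeval_octicPoly, tangentOctic_arc] at this
  exact this ▸ ((dvd_mul_left _ _).mul_left _)

lemma X_dvd_mulArc {i : Fin 3} (hi : M i 2 = 0) : Polynomial.X ∣ mulArc M i := by
  simp [Polynomial.X_dvd_iff, mulArc_apply, hi]

lemma not_X_dvd_mulArc {i : Fin 3} (hi : M i 2 ≠ 0) : ¬Polynomial.X ∣ mulArc M i := by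
  simpa [Polynomial.X_dvd_iff, mulArc_apply] using hi

lemma not_X_dvd_C_sq_mul_C_sq (ha : a ≠ 0) (hb : b ≠ 0) :
    ¬(Polynomial.X : Polynomial k) ∣ Polynomial.C a ^ 2 * Polynomial.C b ^ 2 := by
  simp [Polynomial.X_dvd_iff, Polynomial.coeff_zero_eq_eval_zero, ha, hb]

lemma apply_one_zero_eq_zero (ha : a ≠ 0) (hb : b ≠ 0) (h02 : M 0 2 = 0) (h12 : M 1 2 = 0)
    (h22 : M 2 2 ≠ 0)
    (hF : Polynomial.X ^ 21 ∣ tangentOctic (Polynomial.C a) (Polynomial.C b) (mulArc M)) :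
    M 1 0 = 0 := by
  have h0 := X_dvd_mulArc h02
  have h1 := X_dvd_mulArc h12
  have h2 := not_X_dvd_mulArc h22
  have hQ : Polynomial.X ^ 1 ∣ conic (mulArc M) := by
    rw [pow_one]
    exact dvd_sub (h1.mul_right _) (dvd_pow h0 two_ne_zero)
  have hQ2 : Polynomial.X ^ 2 ∣ conic (mulArc M) :=
    pow_succ_dvd_conic Polynomial.prime_X (not_X_dvd_C_sq_mul_C_sq ha hb) h0 h1 h2
      (by rw [pow_one]; exact dvd_pow h1 two_ne_zero) hQ
      ((pow_dvd_pow Polynomial.X (by decide)).trans hF)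
  have h1_sq : Polynomial.X ^ 2 ∣ mulArc M 1 :=
    Polynomial.prime_X.pow_dvd_of_dvd_mul_right 2 h2
      ((dvd_sub_left (pow_dvd_pow_of_dvd h0 2)).1 hQ2)
  simpa [mulArc_apply, h12, Polynomial.coeff_X] using
    Polynomial.X_pow_dvd_iff.1 h1_sq 1 one_lt_two

lemma conic_mulArc (h02 : M 0 2 = 0) (h10 : M 1 0 = 0) (h12 : M 1 2 = 0) :
    conic (mulArc M) = Polynomial.C (M 1 1 * M 2 2 - M 0 0 ^ 2) * Polynomial.X ^ 2 +
      Polynomial.C (M 1 1 * M 2 0 - 2 * M 0 0 * M 0 1) * Polynomial.X ^ 3 +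
      Polynomial.C (M 1 1 * M 2 1 - M 0 1 ^ 2) * Polynomial.X ^ 4 +
      Polynomial.C (M 1 1 * M 2 2) * Polynomial.X ^ 5 := by
  simp only [conic, mulArc_apply, h02, h10, h12, map_sub, map_mul, map_pow, map_ofNat, map_zero]
  ring

lemma eq_of_X_pow_five_dvd_conic (h02 : M 0 2 = 0) (h10 : M 1 0 = 0) (h12 : M 1 2 = 0)
    (hQ : Polynomial.X ^ 5 ∣ conic (mulArc M)) :
    M 1 1 * M 2 2 = M 0 0 ^ 2 ∧ M 1 1 * M 2 0 = 2 * M 0 0 * M 0 1 ∧ M 1 1 * M 2 1 = M 0 1 ^ 2 := by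
  rw [conic_mulArc h02 h10 h12, Polynomial.X_pow_dvd_iff] at hQ
  refine ⟨sub_eq_zero.1 ?_, sub_eq_zero.1 ?_, sub_eq_zero.1 ?_⟩
  · simpa [Polynomial.coeff_X_pow, -map_mul, -map_sub] using hQ 2 (by decide)
  · simpa [Polynomial.coeff_X_pow, -map_mul, -map_sub] using hQ 3 (by decide)
  · simpa [Polynomial.coeff_X_pow, -map_mul, -map_sub] using hQ 4 (by decide)

lemma eq_of_X_pow_eight_dvd_nodalCubic (h02 : M 0 2 = 0) (h10 : M 1 0 = 0) (h12 : M 1 2 = 0)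
    (h11 : M 1 1 ≠ 0) (h22 : M 2 2 ≠ 0) (hQ : Polynomial.X ^ 5 ∣ conic (mulArc M))
    (hN : Polynomial.X ^ 8 ∣ nodalCubic (mulArc M)) :
    M 0 0 * M 2 2 = M 1 1 ^ 2 ∧ M 0 1 = 0 := by
  obtain ⟨e2, e3, e4⟩ := eq_of_X_pow_five_dvd_conic h02 h10 h12 hQ
  have hN_eq : nodalCubic (mulArc M) =
      Polynomial.C (M 1 1 * (M 0 0 * M 2 2 - M 1 1 ^ 2)) * Polynomial.X ^ 6 +
      Polynomial.C (M 0 1 * (M 1 1 * M 2 2)) * Polynomial.X ^ 7 := by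
    rw [nodalCubic, conic_mulArc h02 h10 h12, e2, e3, e4]
    simp only [← e2, mulArc_apply, h02, h10, h12, sub_self, map_sub, map_mul, map_pow, map_zero]
    ring
  rw [hN_eq, Polynomial.X_pow_dvd_iff] at hN
  have h6 : M 1 1 * (M 0 0 * M 2 2 - M 1 1 ^ 2) = 0 := by
    simpa only [Polynomial.coeff_add, Polynomial.coeff_C_mul, Polynomial.coeff_X_pow, if_true,
      mul_one, Nat.reduceEqDiff, if_false, mul_zero, add_zero] using hN 6 (by decide)
  have h7 : M 0 1 * (M 1 1 * M 2 2) = 0 := by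
    simpa only [Polynomial.coeff_add, Polynomial.coeff_C_mul, Polynomial.coeff_X_pow, if_true,
      mul_one, Nat.reduceEqDiff, if_false, mul_zero, zero_add] using hN 7 (by decide)
  exact ⟨sub_eq_zero.1 ((mul_eq_zero.1 h6).resolve_left h11),
    (mul_eq_zero.1 h7).resolve_right (mul_ne_zero h11 h22)⟩

lemma exists_eq_diagonal (ha : a ≠ 0) (hb : b ≠ 0) (hM : IsUnit M.det) (hc : c ≠ 0)
    (h : aeval (fun i => ∑ j, C (M i j) * X j) (octicPoly a b) = c • octicPoly b a) :
    ∃ p q m : k, p ≠ 0 ∧ m ≠ 0 ∧ q * m = p ^ 2 ∧ p * m = q ^ 2 ∧ M = diagonal ![p, q, m] := by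
  obtain ⟨h02, h12⟩ := apply_two_eq_zero ha hb hM hc h
  have hdet : M.det ≠ 0 := hM.ne_zero
  rw [det_fin_three, h02, h12] at hdet
  have h22 : M 2 2 ≠ 0 := fun h => hdet (by rw [h]; ring)
  have hF := X_pow_dvd_tangentOctic_mulArc h
  have h10 := apply_one_zero_eq_zero ha hb h02 h12 h22 hF
  have h00 : M 0 0 ≠ 0 := fun h => hdet (by rw [h, h10]; ring)
  have h11 : M 1 1 ≠ 0 := fun h => hdet (by rw [h, h10]; ring)
  have hγ := not_X_dvd_C_sq_mul_C_sq ha hb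
  have hv0 : mulArc M 0 =
      Polynomial.X * (Polynomial.C (M 0 0) + Polynomial.C (M 0 1) * Polynomial.X) := by
    rw [mulArc_apply, h02, map_zero]; ring
  have hx : ¬Polynomial.X ∣ Polynomial.C (M 0 0) + Polynomial.C (M 0 1) * Polynomial.X := by
    simpa [Polynomial.X_dvd_iff] using h00
  have hv1 : Polynomial.X ^ 2 ∣ mulArc M 1 :=
    ⟨Polynomial.C (M 1 1), by rw [mulArc_apply, h10, h12, map_zero]; ring⟩
  have hQ := pow_five_dvd_conic Polynomial.prime_X hγ ⟨_, hv0⟩ hv1 (not_X_dvd_mulArc h22)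
    ((pow_dvd_pow Polynomial.X (by decide)).trans hF)
  have hN := pow_eight_dvd_nodalCubic Polynomial.prime_X hγ hv0 hx hv1 hQ hF
  obtain ⟨e2, e3, e4⟩ := eq_of_X_pow_five_dvd_conic h02 h10 h12 hQ
  obtain ⟨hpm, h01⟩ := eq_of_X_pow_eight_dvd_nodalCubic h02 h10 h12 h11 h22 hQ hN
  have h20 : M 2 0 = 0 := by simpa [h01, h11] using e3
  have h21 : M 2 1 = 0 := by simpa [h01, h11] using e4
  refine ⟨M 0 0, M 1 1, M 2 2, h00, h22, e2, hpm, ?_⟩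
  ext i j
  fin_cases i <;> fin_cases j <;> simp [h01, h02, h10, h12, h20, h21]

lemma tangentOctic_of_one_eq_zero {R : Type*} [CommRing R] (a b : R) {v : Fin 3 → R}
    (h : v 1 = 0) : tangentOctic a b v = -v 0 ^ 6 * ((a ^ 4 - 2 * a * b ^ 3) * (v 0 * v 2) +
      (b ^ 4 - 2 * a ^ 3 * b) * v 0 ^ 2 + a ^ 2 * b ^ 2 * v 2 ^ 2) := by
  simp only [tangentOctic, tangentLine, involution_zero, involution_one, involution_two, octic,
    quintic, cubic, nodalCubic, conic, h]
  ring

lemma eq_of_aeval_diagonal {p q m : k}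
    (h : aeval (fun i => ∑ j, C (diagonal ![p, q, m] i j) * X j) (octicPoly a b) =
      c • octicPoly b a) :
    p ^ 6 * m ^ 2 * (a ^ 2 * b ^ 2) = c * (a ^ 2 * b ^ 2) ∧
      p ^ 7 * m * (a ^ 4 - 2 * a * b ^ 3) = c * (b ^ 4 - 2 * a ^ 3 * b) := by
  have hu : (diagonal ![p, q, m]).map (algebraMap k (Polynomial k)) *ᵥ ![1, 0, Polynomial.X] =
      ![Polynomial.C p, 0, Polynomial.C m * Polynomial.X] := by
    funext i
    fin_cases i <;> simp [mulVec, dotProduct, Fin.sum_univ_three]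
  have key := aeval_mulVec_eq h ![1, 0, (Polynomial.X : Polynomial k)]
  rw [hu, aeval_octicPoly, aeval_octicPoly, tangentOctic_of_one_eq_zero _ _ rfl,
    tangentOctic_of_one_eq_zero _ _ rfl] at key
  simp only [cons_val, Polynomial.algebraMap_eq] at key
  have hkey : Polynomial.C (p ^ 8 * (b ^ 4 - 2 * a ^ 3 * b) - c * (a ^ 4 - 2 * a * b ^ 3)) +
      Polynomial.C (p ^ 7 * m * (a ^ 4 - 2 * a * b ^ 3) - c * (b ^ 4 - 2 * a ^ 3 * b)) *
        Polynomial.X +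
      Polynomial.C (p ^ 6 * m ^ 2 * (a ^ 2 * b ^ 2) - c * (a ^ 2 * b ^ 2)) * Polynomial.X ^ 2 =
        0 := by
    simp only [map_sub, map_mul, map_pow, map_ofNat]
    linear_combination -key
  have coeff_eq_zero (i : ℕ) := congrArg (Polynomial.coeff · i) hkey
  refine ⟨sub_eq_zero.1 ?_, sub_eq_zero.1 ?_⟩
  · simpa [Polynomial.coeff_C, -map_mul, -map_sub] using coeff_eq_zero 2
  · simpa [Polynomial.coeff_C, -map_mul, -map_sub] using coeff_eq_zero 1

theorem not_projEquiv_octicPoly {k : Type} [Field k] {a b : k} (ha : a ≠ 0) (hb : b ≠ 0)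
    (hab : a ^ 6 ≠ b ^ 6) : ¬ProjEquiv (octicPoly a b) (octicPoly b a) := by
  rintro ⟨M, hM, c, h⟩
  obtain ⟨p, q, m, hp, hm, hqm, hpm, rfl⟩ := exists_eq_diagonal ha hb hM c.ne_zero h
  obtain ⟨hγ, hα⟩ := eq_of_aeval_diagonal h
  have hc : p ^ 6 * m ^ 2 = c := mul_right_cancel₀ (by simp [ha, hb]) hγ
  have hαβ : p * (a ^ 4 - 2 * a * b ^ 3) = m * (b ^ 4 - 2 * a ^ 3 * b) := by
    refine mul_left_cancel₀ (mul_ne_zero (pow_ne_zero 6 hp) hm) ?_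
    linear_combination hα - (b ^ 4 - 2 * a ^ 3 * b) * hc
  have hpm3 : p ^ 3 = m ^ 3 := by
    refine mul_left_cancel₀ hp ?_
    linear_combination -(m ^ 2 * hpm) - (p ^ 2 + q * m) * hqm
  have hαβ3 : (a ^ 4 - 2 * a * b ^ 3) ^ 3 = (b ^ 4 - 2 * a ^ 3 * b) ^ 3 := by
    refine mul_left_cancel₀ (pow_ne_zero 3 hp) ?_
    rw [← mul_pow, hαβ, mul_pow, hpm3]
  have hfactor : (a ^ 6 - b ^ 6) * (a ^ 3 + b ^ 3) ^ 2 = 0 := by linear_combination hαβ3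
  have hsum : a ^ 3 + b ^ 3 = 0 :=
    pow_eq_zero_iff two_ne_zero |>.1 ((mul_eq_zero.1 hfactor).resolve_left (sub_ne_zero.2 hab))
  exact hab (by linear_combination (a ^ 3 - b ^ 3) * hsum)

end Equivalence

lemma exists_ne_zero_pow_ne_one (R : Type*) [CommRing R] [IsDomain R] [Infinite R] {n : ℕ}
    (hn : 0 < n) : ∃ a : R, a ≠ 0 ∧ a ^ n ≠ 1 := by
  classical
  obtain ⟨a, ha⟩ := Infinite.exists_notMem_finset
    (Polynomial.X * (Polynomial.X ^ n - 1) : Polynomial R).roots.toFinset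
  have : (Polynomial.X * (Polynomial.X ^ n - 1) : Polynomial R) ≠ 0 :=
    mul_ne_zero Polynomial.X_ne_zero (Polynomial.X_pow_sub_C_ne_zero hn 1)
  exact ⟨a, by simpa [this, sub_eq_zero] using ha⟩

end NodalCubic

open NodalCubic in
theorem exists_degree8_counterexample_general {k : Type} [Field k] {a : k} (ha : a ≠ 0)
    (ha6 : a ^ 6 ≠ 1) :
    ∃ f g : MvPolynomial (Fin 3) k,
      Irreducible f ∧ Irreducible g ∧
      f.IsHomogeneous 8 ∧ g.IsHomogeneous 8 ∧
      Nonempty (AwayRing k f ≃ₐ[k] AwayRing k g) ∧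
      ¬ ProjEquiv f g :=
  ⟨octicPoly a 1, octicPoly 1 a, irreducible_octicPoly ha one_ne_zero,
    irreducible_octicPoly one_ne_zero ha, isHomogeneous_octicPoly, isHomogeneous_octicPoly,
    nonempty_awayRing_octicPoly_algEquiv ha one_ne_zero,
    not_projEquiv_octicPoly ha one_ne_zero (by simpa using ha6)⟩

/-- Theorem 1.5: there exist irreducible, projectively non-equivalent plane curves of
degree 8 with isomorphic complements (a degree-8 counterexample to Yoshihara's
conjecture). -/
theorem exists_degree8_counterexample (k : Type) [Field k] [IsAlgClosed k] :
    ∃ f g : MvPolynomial (Fin 3) k,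
      Irreducible f ∧ Irreducible g ∧
      f.IsHomogeneous 8 ∧ g.IsHomogeneous 8 ∧
      Nonempty (AwayRing k f ≃ₐ[k] AwayRing k g) ∧
      ¬ ProjEquiv f g := by
  have : Infinite k := IsAlgClosed.instInfinite
  obtain ⟨a, ha, ha6⟩ := NodalCubic.exists_ne_zero_pow_ne_one k (n := 6) (by decide)
  exact exists_degree8_counterexample_general ha ha6
end

section
/- Let k be an algebraically closed field and let f ∈ k[x₀,x₁,x₂] be an irreducible homogeneous polynomial of total degree d ≥ 1. If the quotient k-algebra k[x₀,x₁]/(f(x₀,x₁,1)) is isomorphic to the polynomial ring k[t] (i.e. the affine curve V(f) ∖ {x₂ = 0} is isomorphic to 𝔸¹), then the line {x₂ = 0} is very tangent to V(f): there exist (a,b) ∈ k² ∖ {(0,0)} and c ∈ kˣ such that f(x₀,x₁,0) = c·(a·x₀ + b·x₁)^d in k[x₀,x₁], i.e. the line meets the curve in exactly one point, with full intersection multiplicity d. -/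
open MvPolynomial

/-!
Let `φ : k[x₀, x₁] → k[t]` be the surjection with kernel `(g)`, `g = f(x₀, x₁, 1)`, and let `e` be
the larger of the degrees of `φ x₀` and `φ x₁`. Some nonzero linear form `M` satisfies
`deg φ(M) < e`. Repeated division by the `φ xᵢ` of degree `e` shows that every polynomial in `t` of
degree less than `(K + 1) e` is the image of a polynomial of degree at most `N + K`, with `N`
independent of `K`. As `φ(M)ⁿ` has degree at most `n (e - 1)`, for large `n` it is the image of some
`H` of degree less than `n`. So `g` divides `Mⁿ - H`, and on leading forms `f(x₀, x₁, 0)` divides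
`Mⁿ`; since `M` is prime, `f(x₀, x₁, 0)` is a power of `M` up to a scalar.
-/

open scoped Polynomial

section LeadingForm

variable {σ τ R : Type*}

section CommSemiring

variable [CommSemiring R]

lemma homogeneousComponent_add_mul {p q : MvPolynomial σ R} {m n : ℕ} (hp : p.totalDegree ≤ m)
    (hq : q.totalDegree ≤ n) :
    homogeneousComponent (m + n) (p * q) =
      homogeneousComponent m p * homogeneousComponent n q := by
  classical
  have coeff_eq_zero {r : MvPolynomial σ R} {l : ℕ} (hr : r.totalDegree ≤ l) {s : σ →₀ ℕ}
      (hs : l < s.degree) : coeff s r = 0 :=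
    coeff_eq_zero_of_totalDegree_lt (hr.trans_lt hs)
  ext s
  rw [coeff_homogeneousComponent]
  split_ifs with hs
  · rw [coeff_mul, coeff_mul]
    refine Finset.sum_congr rfl fun ⟨a, b⟩ hab ↦ ?_
    dsimp only
    have hdeg : a.degree + b.degree = m + n := by
      rw [← hs, ← Finset.HasAntidiagonal.mem_antidiagonal.mp hab, map_add]
    rw [coeff_homogeneousComponent, coeff_homogeneousComponent]
    obtain ha | ha | ha := lt_trichotomy a.degree m
    · rw [coeff_eq_zero hq (s := b) (by omega), ite_self, mul_zero, mul_zero]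
    · rw [if_pos ha, if_pos (by omega)]
    · rw [coeff_eq_zero hp ha, ite_self, zero_mul, zero_mul]
  · exact (((homogeneousComponent_isHomogeneous m p).mul
      (homogeneousComponent_isHomogeneous n q)).coeff_eq_zero hs).symm

lemma homogeneousComponent_sum_prod {ι : Type*} (s : Finset ι) (p : ι → MvPolynomial σ R)
    (n : ι → ℕ) (h : ∀ i ∈ s, (p i).totalDegree ≤ n i) :
    homogeneousComponent (∑ i ∈ s, n i) (∏ i ∈ s, p i) =
      ∏ i ∈ s, homogeneousComponent (n i) (p i) := by
  classical
  induction s using Finset.induction_on with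
  | empty => exact homogeneousComponent_eq_self (isHomogeneous_one σ R)
  | insert i s hi ih =>
    have hs : ∀ j ∈ s, (p j).totalDegree ≤ n j := fun j hj ↦ h j (Finset.mem_insert_of_mem hj)
    rw [Finset.sum_insert hi, Finset.prod_insert hi, Finset.prod_insert hi, ← ih hs]
    exact homogeneousComponent_add_mul (h i (Finset.mem_insert_self i s))
      ((totalDegree_finsetProd s p).trans (Finset.sum_le_sum hs))

lemma homogeneousComponent_mul_pow {p : MvPolynomial σ R} {n : ℕ} (hp : p.totalDegree ≤ n)
    (l : ℕ) : homogeneousComponent (n * l) (p ^ l) = homogeneousComponent n p ^ l := by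
  have h := homogeneousComponent_sum_prod (Finset.range l) (fun _ ↦ p) (fun _ ↦ n) fun _ _ ↦ hp
  simpa [mul_comm] using h

lemma totalDegree_pow_le_mul {p : MvPolynomial σ R} {n : ℕ} (hp : p.totalDegree ≤ n) (l : ℕ) :
    (p ^ l).totalDegree ≤ n * l :=
  (totalDegree_pow p l).trans ((Nat.mul_le_mul_left l hp).trans_eq (mul_comm l n))

lemma totalDegree_aeval_le {v : τ → MvPolynomial σ R} {n : ℕ} (hv : ∀ i, (v i).totalDegree ≤ n)
    (p : MvPolynomial τ R) : (aeval v p).totalDegree ≤ n * p.totalDegree := by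
  rw [aeval_def, eval₂_eq]
  refine totalDegree_finsetSum_le fun s hs ↦ ?_
  calc (C (coeff s p) * ∏ i ∈ s.support, v i ^ s i).totalDegree
      ≤ ∑ i ∈ s.support, (v i ^ s i).totalDegree := by
        rw [← smul_eq_C_mul]
        exact (totalDegree_smul_le _ _).trans (totalDegree_finsetProd _ _)
    _ ≤ ∑ i ∈ s.support, n * s i :=
        Finset.sum_le_sum fun i _ ↦ totalDegree_pow_le_mul (hv i) (s i)
    _ = n * s.degree := (Finset.mul_sum _ _ _).symm
    _ ≤ n * p.totalDegree := Nat.mul_le_mul_left n (le_totalDegree hs)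

lemma homogeneousComponent_aeval {v : τ → MvPolynomial σ R} {n d : ℕ}
    (hv : ∀ i, (v i).totalDegree ≤ n) {p : MvPolynomial τ R} (hp : p.IsHomogeneous d) :
    homogeneousComponent (n * d) (aeval v p) =
      aeval (fun i ↦ homogeneousComponent n (v i)) p := by
  rw [aeval_def, aeval_def, eval₂_eq, eval₂_eq, map_sum]
  refine Finset.sum_congr rfl fun s hs ↦ ?_
  have hdeg : n * d = ∑ i ∈ s.support, n * s i := by
    rw [hp.degree_eq_sum_deg_support hs, Finset.mul_sum]
  rw [algebraMap_eq, homogeneousComponent_C_mul, hdeg, homogeneousComponent_sum_prod _ _ _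
    fun i _ ↦ totalDegree_pow_le_mul (hv i) (s i)]
  simp only [homogeneousComponent_mul_pow (hv _)]

/-- The leading form of a polynomial: its homogeneous component of highest degree. The leading form
of `0` is `0`. -/
noncomputable def leadingForm (p : MvPolynomial σ R) : MvPolynomial σ R :=
  homogeneousComponent p.totalDegree p

lemma leadingForm_of_isHomogeneous {p : MvPolynomial σ R} {n : ℕ} (hp : p.IsHomogeneous n) :
    leadingForm p = p := by
  rcases eq_or_ne p 0 with rfl | hp₀
  · exact map_zero _
  · rw [leadingForm, hp.totalDegree hp₀, homogeneousComponent_eq_self hp]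

lemma leadingForm_eq_homogeneousComponent {p : MvPolynomial σ R} {n : ℕ}
    (hp : p.totalDegree ≤ n) (h : homogeneousComponent n p ≠ 0) :
    leadingForm p = homogeneousComponent n p := by
  have hn : n ≤ p.totalDegree := not_lt.mp (mt (homogeneousComponent_eq_zero n p) h)
  rw [leadingForm, le_antisymm hp hn]

lemma leadingForm_mul [NoZeroDivisors R] (p q : MvPolynomial σ R) :
    leadingForm (p * q) = leadingForm p * leadingForm q := by
  rcases eq_or_ne p 0 with rfl | hp
  · simp [leadingForm]
  rcases eq_or_ne q 0 with rfl | hq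
  · simp [leadingForm]
  · rw [leadingForm, totalDegree_mul_of_isDomain hp hq]
    exact homogeneousComponent_add_mul le_rfl le_rfl

end CommSemiring

lemma leadingForm_sub_of_totalDegree_lt [CommRing R] {p q : MvPolynomial σ R}
    (h : q.totalDegree < p.totalDegree) : leadingForm (p - q) = leadingForm p := by
  have hdeg : (p - q).totalDegree = p.totalDegree := by
    rw [sub_eq_add_neg, totalDegree_add_eq_left_of_totalDegree_lt (by rwa [totalDegree_neg])]
  rw [leadingForm, hdeg, map_sub, homogeneousComponent_eq_zero _ _ h, sub_zero, leadingForm]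

end LeadingForm

section Divisibility

lemma dvd_aeval_sub_aeval {σ R A : Type*} [CommSemiring R] [CommRing A] [Algebra R A] {a : A}
    {v w : σ → A} (h : ∀ i, a ∣ v i - w i) (p : MvPolynomial σ R) :
    a ∣ aeval v p - aeval w p := by
  simp only [← Ideal.mem_span_singleton, ← Ideal.Quotient.mk_eq_mk_iff_sub_mem] at h ⊢
  let π := Ideal.Quotient.mkₐ R (Ideal.span {a})
  have hπ : π.comp (aeval v) = π.comp (aeval w) := algHom_ext fun i ↦ by simpa [π] using h i
  exact DFunLike.congr_fun hπ p

lemma aeval_X_X_zero_ne_zero {R : Type*} [CommRing R] {f : MvPolynomial (Fin 3) R}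
    (hf : ¬ X 2 ∣ f) : aeval ![(X 0 : MvPolynomial (Fin 2) R), X 1, 0] f ≠ 0 := by
  intro h
  have hcomp : aeval ![(X 0 : MvPolynomial (Fin 3) R), X 1, 0] f =
      rename Fin.castSucc (aeval ![(X 0 : MvPolynomial (Fin 2) R), X 1, 0] f) := by
    rw [← AlgHom.comp_apply]
    congr 1
    ext i : 1
    fin_cases i <;> simp
  have hdvd : X 2 ∣ aeval X f - aeval ![(X 0 : MvPolynomial (Fin 3) R), X 1, 0] f :=
    dvd_aeval_sub_aeval (fun i ↦ by fin_cases i <;> simp) f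
  rw [hcomp, h, map_zero, sub_zero, aeval_X_left_apply] at hdvd
  exact hf hdvd

lemma not_X_two_dvd_of_irreducible {R : Type*} [CommRing R] [IsDomain R]
    {f : MvPolynomial (Fin 3) R} (hf : Irreducible f)
    [Nontrivial (MvPolynomial (Fin 2) R ⧸
      Ideal.span {aeval ![(X 0 : MvPolynomial (Fin 2) R), X 1, 1] f})] : ¬ X 2 ∣ f := by
  rintro ⟨u, rfl⟩
  have hu : IsUnit u := (hf.isUnit_or_isUnit rfl).resolve_left X_prime.not_isUnit
  refine Ideal.Quotient.nontrivial_iff.mp ‹_› (Ideal.span_singleton_eq_top.mpr ?_)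
  simpa using hu.map (aeval ![(X 0 : MvPolynomial (Fin 2) R), X 1, 1])

variable {σ k : Type*} [Field k]

lemma prime_of_isHomogeneous_one {p : MvPolynomial σ k} (hp : p.IsHomogeneous 1) (hp₀ : p ≠ 0) :
    Prime p := by
  refine (irreducible_of_totalDegree_eq_one (hp.totalDegree hp₀) fun x hx ↦ ?_).prime
  obtain ⟨s, hs⟩ := ne_zero_iff.mp hp₀
  exact (ne_zero_of_dvd_ne_zero hs (hx s)).isUnit

lemma eq_smul_pow_of_dvd_pow {p q : MvPolynomial σ k} {d n : ℕ} (hp : p.IsHomogeneous 1)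
    (hp₀ : p ≠ 0) (hq : q.IsHomogeneous d) (hdvd : q ∣ p ^ n) :
    ∃ c : kˣ, q = (c : k) • p ^ d := by
  obtain ⟨j, -, hj⟩ := (dvd_prime_pow (prime_of_isHomogeneous_one hp hp₀) n).mp hdvd
  obtain ⟨u, rfl⟩ := hj.symm
  obtain ⟨c, hc, hu⟩ := isUnit_iff_eq_C_of_isReduced.mp u.isUnit
  rw [hu, mul_comm] at hq ⊢
  have hj : (C c * p ^ j).IsHomogeneous j := by simpa using (hp.pow j).C_mul c
  have hne : C c * p ^ j ≠ 0 := mul_ne_zero (by simpa using hc.ne_zero) (pow_ne_zero j hp₀)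
  exact ⟨hc.unit, by rw [hj.inj_right hq hne, smul_eq_C_mul, hc.unit_spec]⟩

end Divisibility

section LinearForm

variable {R : Type*} [CommSemiring R]

lemma isHomogeneous_C_mul_X_add_C_mul_X (a b : R) :
    (C a * X 0 + C b * X 1 : MvPolynomial (Fin 2) R).IsHomogeneous 1 :=
  (isHomogeneous_C_mul_X a 0).add (isHomogeneous_C_mul_X b 1)

lemma C_mul_X_add_C_mul_X_ne_zero {a b : R} (hab : (a, b) ≠ (0, 0)) :
    (C a * X 0 + C b * X 1 : MvPolynomial (Fin 2) R) ≠ 0 := by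
  contrapose hab
  have ha : a = 0 := by simpa using congrArg (aeval ![(1 : R), 0]) hab
  have hb : b = 0 := by simpa using congrArg (aeval ![(0 : R), 1]) hab
  rw [ha, hb]

end LinearForm

section SurjectionOntoPolynomialRing

variable {σ : Type*}

lemma exists_natDegree_map_X_ne_zero {R : Type*} [CommSemiring R] [Nontrivial R]
    {φ : MvPolynomial σ R →ₐ[R] R[X]} (hφ : Function.Surjective φ) :
    ∃ i, (φ (X i)).natDegree ≠ 0 := by
  by_contra! hconst
  have hrange : φ.range ≤ ⊥ := by
    rw [aeval_unique φ, aeval_range, Algebra.adjoin_le_iff]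
    rintro _ ⟨i, rfl⟩
    exact ⟨_, (Polynomial.eq_C_of_natDegree_eq_zero (hconst i)).symm⟩
  obtain ⟨a, ha⟩ := hrange (φ.mem_range.mpr (hφ Polynomial.X))
  have hdeg : (0 : ℕ) = 1 := by simpa using congrArg Polynomial.natDegree ha
  exact zero_ne_one hdeg

lemma exists_natDegree_map_linear_lt {R : Type*} [CommRing R] [Nontrivial R]
    {φ : MvPolynomial (Fin 2) R →ₐ[R] R[X]} (hφ : Function.Surjective φ) :
    ∃ i, ∃ a b : R, (a, b) ≠ (0, 0) ∧
      (φ (C a * X 0 + C b * X 1)).natDegree < (φ (X i)).natDegree := by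
  obtain ⟨i, hi⟩ := Finite.exists_max fun i ↦ (φ (X i)).natDegree
  obtain ⟨j, hj⟩ := exists_natDegree_map_X_ne_zero hφ
  have he : 0 < (φ (X i)).natDegree := (Nat.pos_of_ne_zero hj).trans_le (hi j)
  set e := (φ (X i)).natDegree
  have hlead : (φ (X i)).coeff e ≠ 0 :=
    Polynomial.leadingCoeff_ne_zero.mpr (Polynomial.ne_zero_of_natDegree_gt he)
  refine ⟨i, (φ (X 1)).coeff e, -(φ (X 0)).coeff e, ?_, ?_⟩
  · rw [Ne, Prod.mk.injEq, neg_eq_zero, not_and_or]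
    fin_cases i
    exacts [Or.inr hlead, Or.inl hlead]
  · rw [map_add, ← smul_eq_C_mul, ← smul_eq_C_mul, map_smul, map_smul]
    refine (Polynomial.natDegree_le_pred ?_ ?_).trans_lt (Nat.sub_one_lt_of_lt he)
    · exact Polynomial.natDegree_add_le_of_degree_le
        ((Polynomial.natDegree_smul_le _ _).trans (hi 0))
        ((Polynomial.natDegree_smul_le _ _).trans (hi 1))
    · simp only [Polynomial.coeff_add, Polynomial.coeff_smul, smul_eq_mul]
      ring

lemma exists_totalDegree_le_of_natDegree_lt {R : Type*} [CommSemiring R]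
    {φ : MvPolynomial σ R →ₐ[R] R[X]} (hφ : Function.Surjective φ) (e : ℕ) :
    ∃ N, ∀ r : R[X], r.natDegree < e → ∃ p, p.totalDegree ≤ N ∧ φ p = r := by
  obtain ⟨T, hT⟩ := hφ Polynomial.X
  refine ⟨e * T.totalDegree, fun r hr ↦ ⟨Polynomial.aeval T r, ?_, ?_⟩⟩
  · rw [Polynomial.aeval_eq_sum_range]
    refine totalDegree_finsetSum_le fun i hi ↦ ?_
    have hie : i ≤ e := (Finset.mem_range_succ_iff.mp hi).trans hr.le
    calc (r.coeff i • T ^ i).totalDegree ≤ (T ^ i).totalDegree := totalDegree_smul_le _ _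
      _ ≤ i * T.totalDegree := totalDegree_pow T i
      _ ≤ e * T.totalDegree := Nat.mul_le_mul_right _ hie
  · rw [← Polynomial.aeval_algHom_apply, hT, Polynomial.aeval_X_left_apply]

variable {k : Type*} [Field k]

lemma natDegree_div (p : k[X]) {q : k[X]} (hq : q ≠ 0) :
    (p / q).natDegree = p.natDegree - q.natDegree := by
  have hlead : q.leadingCoeff⁻¹ ≠ 0 := inv_ne_zero (Polynomial.leadingCoeff_ne_zero.mpr hq)
  rw [Polynomial.div_def, Polynomial.natDegree_C_mul hlead,
    Polynomial.natDegree_divByMonic _ (Polynomial.monic_mul_leadingCoeff_inv hq),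
    Polynomial.natDegree_mul_C hlead]

lemma exists_totalDegree_le_of_natDegree_lt_mul {φ : MvPolynomial σ k →ₐ[k] k[X]}
    {L : MvPolynomial σ k} (hL : L.totalDegree ≤ 1) (hφL : (φ L).natDegree ≠ 0) {N : ℕ}
    (hN : ∀ r : k[X], r.natDegree < (φ L).natDegree → ∃ p, p.totalDegree ≤ N ∧ φ p = r) (K : ℕ) :
    ∀ r : k[X], r.natDegree < (K + 1) * (φ L).natDegree →
      ∃ p, p.totalDegree ≤ N + K ∧ φ p = r := by
  induction K with
  | zero => simpa using hN
  | succ K ih =>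
    intro r hr
    have hL₀ : φ L ≠ 0 := by
      intro h
      simp [h] at hφL
    have hdiv : (r / φ L).natDegree < (K + 1) * (φ L).natDegree := by
      have : 0 < (K + 1) * (φ L).natDegree := by positivity
      rw [natDegree_div r hL₀]
      rw [add_one_mul] at hr
      omega
    obtain ⟨p, hp, hφp⟩ := ih _ hdiv
    obtain ⟨q, hq, hφq⟩ := hN _ (Polynomial.natDegree_mod_lt r hφL)
    refine ⟨L * p + q, ?_, ?_⟩
    · have hLp : (L * p).totalDegree ≤ 1 + (N + K) :=
        (totalDegree_mul L p).trans (add_le_add hL hp)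
      exact (totalDegree_add _ _).trans (max_le (by omega) (by omega))
    · rw [map_add, map_mul, hφp, hφq, EuclideanDomain.div_add_mod]

lemma exists_totalDegree_lt_map_eq_pow {φ : MvPolynomial σ k →ₐ[k] k[X]}
    (hφ : Function.Surjective φ) {L M : MvPolynomial σ k} (hL : L.totalDegree ≤ 1)
    (hlt : (φ M).natDegree < (φ L).natDegree) :
    ∃ n p, p.totalDegree < n ∧ φ p = φ M ^ n := by
  obtain ⟨N, hN⟩ := exists_totalDegree_le_of_natDegree_lt hφ (φ L).natDegree
  have happrox := exists_totalDegree_le_of_natDegree_lt_mul hL (by omega) hN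
  obtain ⟨e, he⟩ : ∃ e, (φ L).natDegree = e + 1 := Nat.exists_eq_add_one.mpr (by omega)
  rw [he] at hlt happrox
  -- `n = (N + 1) (e + 1)` and `K = (N + 1) e` satisfy both `n e < (K + 1) (e + 1)` and `N + K < n`
  have hdeg : (φ M ^ ((N + 1) * (e + 1))).natDegree < ((N + 1) * e + 1) * (e + 1) :=
    calc (φ M ^ ((N + 1) * (e + 1))).natDegree
        ≤ (N + 1) * (e + 1) * (φ M).natDegree := Polynomial.natDegree_pow_le
      _ ≤ (N + 1) * (e + 1) * e := Nat.mul_le_mul_left _ (Nat.lt_succ_iff.mp hlt)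
      _ < ((N + 1) * e + 1) * (e + 1) := by linarith
  obtain ⟨p, hp, hφp⟩ := happrox _ _ hdeg
  exact ⟨_, p, by linarith, hφp⟩

theorem exists_leadingForm_dvd_pow {φ : MvPolynomial σ k →ₐ[k] k[X]}
    (hφ : Function.Surjective φ) {g L M : MvPolynomial σ k} (hker : RingHom.ker φ ≤ Ideal.span {g})
    (hL : L.totalDegree ≤ 1) (hM : M.IsHomogeneous 1)
    (hlt : (φ M).natDegree < (φ L).natDegree) : ∃ n, leadingForm g ∣ M ^ n := by
  rcases eq_or_ne M 0 with rfl | hM₀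
  · exact ⟨1, by simp⟩
  obtain ⟨n, p, hp, hφp⟩ := exists_totalDegree_lt_map_eq_pow hφ hL hlt
  have hMn : (M ^ n).totalDegree = n := by
    simpa using (hM.pow n).totalDegree (pow_ne_zero n hM₀)
  have hmem : M ^ n - p ∈ RingHom.ker φ := by
    rw [RingHom.mem_ker, map_sub, map_pow, hφp, sub_self]
  obtain ⟨h, hh⟩ := Ideal.mem_span_singleton.mp (hker hmem)
  refine ⟨n, leadingForm h, ?_⟩
  rw [← leadingForm_mul, ← hh, leadingForm_sub_of_totalDegree_lt (by rwa [hMn]),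
    leadingForm_of_isHomogeneous (hM.pow n)]

end SurjectionOntoPolynomialRing

lemma isHomogeneous_aeval_X_X_zero {R : Type*} [CommSemiring R] {f : MvPolynomial (Fin 3) R}
    {d : ℕ} (hf : f.IsHomogeneous d) :
    (aeval ![(X 0 : MvPolynomial (Fin 2) R), X 1, 0] f).IsHomogeneous d := by
  have h := hf.aeval (n := 1) ![(X 0 : MvPolynomial (Fin 2) R), X 1, 0] fun i ↦ by
    fin_cases i
    exacts [isHomogeneous_X R 0, isHomogeneous_X R 1, isHomogeneous_zero _ _ _]
  rwa [one_mul] at h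

lemma leadingForm_aeval_X_X_one {R : Type*} [CommRing R] {f : MvPolynomial (Fin 3) R} {d : ℕ}
    (hf : f.IsHomogeneous d) (hX : ¬ X 2 ∣ f) :
    leadingForm (aeval ![(X 0 : MvPolynomial (Fin 2) R), X 1, 1] f) =
      aeval ![(X 0 : MvPolynomial (Fin 2) R), X 1, 0] f := by
  have hv : ∀ i, (![(X 0 : MvPolynomial (Fin 2) R), X 1, 1] i).totalDegree ≤ 1 := fun i ↦ by
    fin_cases i
    exacts [(isHomogeneous_X R 0).totalDegree_le, (isHomogeneous_X R 1).totalDegree_le,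
      totalDegree_one.trans_le zero_le_one]
  have hcomp : homogeneousComponent d (aeval ![(X 0 : MvPolynomial (Fin 2) R), X 1, 1] f) =
      aeval ![(X 0 : MvPolynomial (Fin 2) R), X 1, 0] f := by
    have h := homogeneousComponent_aeval hv hf
    rw [one_mul] at h
    rw [h]
    congr 2 with i : 1
    fin_cases i
    exacts [homogeneousComponent_eq_self (isHomogeneous_X R 0),
      homogeneousComponent_eq_self (isHomogeneous_X R 1),
      homogeneousComponent_eq_zero _ _ (by simp)]
  have hdeg := (totalDegree_aeval_le hv f).trans ((one_mul _).trans_le hf.totalDegree_le)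
  rw [leadingForm_eq_homogeneousComponent hdeg (hcomp ▸ aeval_X_X_zero_ne_zero hX), hcomp]

theorem very_tangent_of_affine_line_general (k : Type*) [Field k]
    (f : MvPolynomial (Fin 3) k) (d : ℕ) (hf : f.IsHomogeneous d) (hX : ¬ X 2 ∣ f)
    (hA1 : Nonempty ((MvPolynomial (Fin 2) k ⧸
        Ideal.span { aeval ![(X 0 : MvPolynomial (Fin 2) k), X 1, 1] f }) ≃ₐ[k]
        Polynomial k)) :
    ∃ a b : k, (a, b) ≠ (0, 0) ∧ ∃ c : kˣ,
      aeval ![(X 0 : MvPolynomial (Fin 2) k), X 1, 0] f =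
        (c : k) • (C a * X 0 + C b * X 1) ^ d := by
  obtain ⟨E⟩ := hA1
  let φ := E.toAlgHom.comp (Ideal.Quotient.mkₐ k _)
  have hφ : Function.Surjective φ := E.surjective.comp (Ideal.Quotient.mkₐ_surjective k _)
  have hker : RingHom.ker φ ≤ Ideal.span {aeval ![X 0, X 1, 1] f} := fun p hp ↦
    Ideal.Quotient.eq_zero_iff_mem.mp ((map_eq_zero_iff E E.injective).mp hp)
  obtain ⟨i, a, b, hab, hlt⟩ := exists_natDegree_map_linear_lt hφ
  have hM := isHomogeneous_C_mul_X_add_C_mul_X a b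
  obtain ⟨n, hdvd⟩ := exists_leadingForm_dvd_pow hφ hker (totalDegree_X i).le hM hlt
  rw [leadingForm_aeval_X_X_one hf hX] at hdvd
  exact ⟨a, b, hab, eq_smul_pow_of_dvd_pow hM (C_mul_X_add_C_mul_X_ne_zero hab)
    (isHomogeneous_aeval_X_X_zero hf) hdvd⟩

/-- The forward implication of Lemma 3.1: if the affine curve `V(f) ∖ {x₂ = 0}` is
isomorphic to `𝔸¹` (its coordinate ring `k[x₀,x₁]/(f(x₀,x₁,1))` is a polynomial ring in
one variable), then the line `{x₂ = 0}` is very tangent to `V(f)`: the restriction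
`f(x₀,x₁,0)` of `f` to the line is, up to a nonzero scalar, the `d`-th power of a nonzero
linear form, i.e. the line meets the curve in a single point with full multiplicity `d`. -/
theorem very_tangent_of_affine_line (k : Type) [Field k] [IsAlgClosed k]
    (f : MvPolynomial (Fin 3) k) (d : ℕ) (hd : 1 ≤ d)
    (hf : f.IsHomogeneous d) (hfirr : Irreducible f)
    (hA1 : Nonempty ((MvPolynomial (Fin 2) k ⧸
        Ideal.span { aeval ![(X 0 : MvPolynomial (Fin 2) k), X 1, 1] f }) ≃ₐ[k]
        Polynomial k)) :
    ∃ a b : k, (a, b) ≠ (0, 0) ∧ ∃ c : kˣ,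
      aeval ![(X 0 : MvPolynomial (Fin 2) k), X 1, 0] f =
        (c : k) • (C a * X 0 + C b * X 1) ^ d := by
  have := hA1.some.toEquiv.nontrivial
  exact very_tangent_of_affine_line_general k f d hf (not_X_two_dvd_of_irreducible hfirr) hA1
end
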